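/- Let g be a solution of the Ricci flow on Ω × [0,T) and fix (x,t) ∈ Ω × (0,T). Then the curvature components of g̃_{ε,δ} at (x,t) have the following limits: for every δ > 0, lim_{ε→∞} R̃^l_{ijk}(ε,δ) = R^l_{ijk} for 1 ≤ i,j,k,l ≤ n, and lim_{ε→∞} R̃^l_{0jk}(ε,δ) = −∇_k R^l_j + ∇^l R_{jk} for 1 ≤ j,k,l ≤ n; and the iterated limit lim_{δ→0} lim_{ε→∞} R̃^l_{i00}(ε,δ) = ∂R^l_i/∂t − ½ ∇_i∇^l R − R^m_i R^l_m + (1/(2t)) R^l_i = ΔR^l_i − ½ ∇_i∇^l R + 2 g^{lm} R^q_{pim} R^p_q − R^m_i R^l_m + (1/(2t)) R^l_i for 1 ≤ i,l ≤ n. Thus the limiting curvature components are exactly the components of Hamilton's Harnack expression Z + (1/(2t)) R_{ij}W_iW_j. -/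

import Mathlib

/- Common local-coordinate framework for the Chow–Chu space-time
   interpretation of Hamilton's Harnack inequality for the Ricci flow. -/

noncomputable section
open scoped BigOperators
open Filter

namespace CC

/-- A time-dependent scalar field on `ℝⁿ × ℝ` (space variable first, then time). -/
abbrev Fld (n : ℕ) := (Fin n → ℝ) → ℝ → ℝ

/-- A time-dependent 2-tensor field (e.g. a metric) in local coordinates. -/
abbrev Met (n : ℕ) := Fin n → Fin n → Fld n

variable {n : ℕ}

/-- Spatial partial derivative `∂ᵢ` of a time-dependent scalar field. -/
def spd (i : Fin n) (u : Fld n) : Fld n :=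
  fun x t => fderiv ℝ (fun y => u y t) x (Pi.single i 1)

/-- Time partial derivative `∂/∂t` of a time-dependent scalar field. -/
def tpd (u : Fld n) : Fld n :=
  fun x t => deriv (fun s => u x s) t

/-- Christoffel symbols `Γ^k_{ij} = ½ g^{kl}(∂ᵢ g_{jl} + ∂ⱼ g_{il} − ∂ₗ g_{ij})`. -/
def Gamma (g ginv : Met n) (k i j : Fin n) : Fld n :=
  fun x t => (1/2) * ∑ l, ginv k l x t *
    (spd i (g j l) x t + spd j (g i l) x t - spd l (g i j) x t)

/-- Riemann curvature `R^l_{ijk} = ∂ᵢΓ^l_{jk} − ∂ⱼΓ^l_{ik} + Γ^m_{jk}Γ^l_{im} − Γ^m_{ik}Γ^l_{jm}`. -/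
def Riem (g ginv : Met n) (l i j k : Fin n) : Fld n :=
  fun x t => spd i (Gamma g ginv l j k) x t - spd j (Gamma g ginv l i k) x t
    + ∑ m, (Gamma g ginv m j k x t * Gamma g ginv l i m x t
          - Gamma g ginv m i k x t * Gamma g ginv l j m x t)

/-- Ricci curvature `R_{jk} = R^p_{pjk}`. -/
def Ric (g ginv : Met n) (j k : Fin n) : Fld n :=
  fun x t => ∑ p, Riem g ginv p p j k x t

/-- Scalar curvature `R = g^{jk} R_{jk}`. -/
def Scal (g ginv : Met n) : Fld n :=
  fun x t => ∑ j, ∑ k, ginv j k x t * Ric g ginv j k x t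

/-- Ricci curvature with raised index, `R^k_i = g^{km} R_{im}`. -/
def RicUp (g ginv : Met n) (k i : Fin n) : Fld n :=
  fun x t => ∑ m, ginv k m x t * Ric g ginv i m x t

/-- Fully lowered Riemann tensor `R_{ijkl} = g_{lm} R^m_{ijk}`. -/
def RiemLow (g ginv : Met n) (i j k l : Fin n) : Fld n :=
  fun x t => ∑ m, g l m x t * Riem g ginv m i j k x t

/-- Covariant derivative of a 1-form: `∇ᵢω_j = ∂ᵢω_j − Γ^p_{ij} ω_p`. -/
def cd1 (g ginv : Met n) (i : Fin n) (ω : Fin n → Fld n) (j : Fin n) : Fld n :=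
  fun x t => spd i (ω j) x t - ∑ p, Gamma g ginv p i j x t * ω p x t

/-- Covariant derivative of a (0,2)-tensor. -/
def cd2 (g ginv : Met n) (i : Fin n) (A : Fin n → Fin n → Fld n) (j k : Fin n) : Fld n :=
  fun x t => spd i (A j k) x t - ∑ p, Gamma g ginv p i j x t * A p k x t
    - ∑ p, Gamma g ginv p i k x t * A j p x t

/-- Covariant derivative of a (1,1)-tensor `T^l_j`:
`∇_a T^l_j = ∂_a T^l_j + Γ^l_{ap} T^p_j − Γ^p_{aj} T^l_p`. -/
def cd11 (g ginv : Met n) (a : Fin n) (T : Fin n → Fin n → Fld n) (l j : Fin n) : Fld n :=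
  fun x t => spd a (T l j) x t + ∑ p, Gamma g ginv l a p x t * T p j x t
    - ∑ p, Gamma g ginv p a j x t * T l p x t

/-- Covariant derivative of a vector field: `∇ᵢV^l = ∂ᵢV^l + Γ^l_{ip} V^p`. -/
def cdVec (g ginv : Met n) (i : Fin n) (V : Fin n → Fld n) (l : Fin n) : Fld n :=
  fun x t => spd i (V l) x t + ∑ p, Gamma g ginv l i p x t * V p x t

/-- Hessian of a scalar: `∇ᵢ∇ⱼu = ∂ᵢ∂ⱼu − Γ^p_{ij}∂_p u`. -/
def hess (g ginv : Met n) (u : Fld n) (i j : Fin n) : Fld n :=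
  fun x t => spd i (spd j u) x t - ∑ p, Gamma g ginv p i j x t * spd p u x t

/-- Gradient (raised differential) of the scalar curvature: `∇^l R = g^{lm}∂_m R`. -/
def gradScal (g ginv : Met n) (l : Fin n) : Fld n :=
  fun x t => ∑ m, ginv l m x t * spd m (Scal g ginv) x t

/-- Rough Laplacian `Δ = g^{pq}∇_p∇_q` on 1-forms. -/
def lap1 (g ginv : Met n) (V : Fin n → Fld n) (j : Fin n) : Fld n :=
  fun x t => ∑ p, ∑ q, ginv p q x t *
    (spd p (cd1 g ginv q V j) x t
     - ∑ m, Gamma g ginv m p q x t * cd1 g ginv m V j x t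
     - ∑ m, Gamma g ginv m p j x t * cd1 g ginv q V m x t)

/-- Rough Laplacian `Δ = g^{pq}∇_p∇_q` on (0,2)-tensors. -/
def lap02 (g ginv : Met n) (A : Fin n → Fin n → Fld n) (i j : Fin n) : Fld n :=
  fun x t => ∑ p, ∑ q, ginv p q x t *
    (spd p (cd2 g ginv q A i j) x t
     - ∑ m, Gamma g ginv m p q x t * cd2 g ginv m A i j x t
     - ∑ m, Gamma g ginv m p i x t * cd2 g ginv q A m j x t
     - ∑ m, Gamma g ginv m p j x t * cd2 g ginv q A i m x t)

/-- Rough Laplacian `Δ = g^{pq}∇_p∇_q` on (1,1)-tensors. -/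
def lap11 (g ginv : Met n) (T : Fin n → Fin n → Fld n) (l i : Fin n) : Fld n :=
  fun x t => ∑ p, ∑ q, ginv p q x t *
    (spd p (cd11 g ginv q T l i) x t
     + ∑ m, Gamma g ginv l p m x t * cd11 g ginv q T m i x t
     - ∑ m, Gamma g ginv m p q x t * cd11 g ginv m T l i x t
     - ∑ m, Gamma g ginv m p i x t * cd11 g ginv q T l m x t)

/-- Laplacian of the scalar curvature `ΔR = g^{ij}(∂ᵢ∂ⱼR − Γ^p_{ij}∂_pR)`. -/
def lapScal (g ginv : Met n) : Fld n :=
  fun x t => ∑ i, ∑ j, ginv i j x t * hess g ginv (Scal g ginv) i j x t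

/-- Squared norm of the Ricci tensor `|Ric|² = g^{ik}g^{jl}R_{ij}R_{kl}`. -/
def normRicSq (g ginv : Met n) : Fld n :=
  fun x t => ∑ i, ∑ j, ∑ k, ∑ l,
    ginv i k x t * ginv j l x t * Ric g ginv i j x t * Ric g ginv k l x t

/-- Hamilton's tensor `P_{ijk} = ∇ᵢR_{jk} − ∇ⱼR_{ik}`. -/
def Pt (g ginv : Met n) (i j k : Fin n) : Fld n :=
  fun x t => cd2 g ginv i (Ric g ginv) j k x t - cd2 g ginv j (Ric g ginv) i k x t

/-- Hamilton's tensor `M_{ij} = ΔR_{ij} − ½∇ᵢ∇ⱼR + 2R_{kijl}R_{kl} − R_{ik}R_{kj}`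
(repeated lower indices contracted with `g^{··}`). -/
def Mt (g ginv : Met n) (i j : Fin n) : Fld n :=
  fun x t => lap02 g ginv (Ric g ginv) i j x t
    - (1/2) * hess g ginv (Scal g ginv) i j x t
    + 2 * ∑ k, ∑ l, ∑ a, ∑ b, ginv k a x t * ginv l b x t *
        RiemLow g ginv k i j l x t * Ric g ginv a b x t
    - ∑ k, ∑ a, ginv k a x t * Ric g ginv i k x t * Ric g ginv a j x t

/-- Hamilton's Harnack quadratic
`Z(U,W) = M_{ij}W_iW_j − 2P_{ijk}U_{ij}W_k + R_{ijkl}U_{ij}U_{lk}`,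
repeated lower indices being contracted with `g^{··}`. -/
def Zharnack (g ginv : Met n) (U : Fin n → Fin n → ℝ) (W : Fin n → ℝ) : Fld n :=
  fun x t =>
    (∑ i, ∑ j, ∑ p, ∑ q, ginv i p x t * ginv j q x t * Mt g ginv i j x t * W p * W q)
    - 2 * (∑ i, ∑ j, ∑ k, ∑ p, ∑ q, ∑ r,
        ginv i p x t * ginv j q x t * ginv k r x t * Pt g ginv i j k x t * U p q * W r)
    + (∑ i, ∑ j, ∑ k, ∑ l, ∑ p, ∑ q, ∑ r, ∑ s,
        ginv i p x t * ginv j q x t * ginv k r x t * ginv l s x t *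
          RiemLow g ginv i j k l x t * U p q * U s r)

/-- `g` (with pointwise inverse `ginv`) is a smooth solution of the Ricci flow
`∂g_{ij}/∂t = −2R_{ij}` on `Ω × [0,T)`. -/
def RicciFlow (Ωs : Set (Fin n → ℝ)) (T : ℝ) (g ginv : Met n) : Prop :=
  IsOpen Ωs ∧ IsConnected Ωs ∧ 0 < T ∧
  (∀ i j, ContDiffOn ℝ (⊤ : ℕ∞) (fun p : (Fin n → ℝ) × ℝ => g i j p.1 p.2)
      (Ωs ×ˢ Set.Ico 0 T)) ∧
  (∀ x ∈ Ωs, ∀ t ∈ Set.Ico (0:ℝ) T,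
    (∀ i j, g i j x t = g j i x t) ∧
    (∀ v : Fin n → ℝ, v ≠ 0 → 0 < ∑ i, ∑ j, g i j x t * v i * v j) ∧
    (∀ i j, ∑ k, g i k x t * ginv k j x t = (if i = j then (1:ℝ) else 0)) ∧
    (∀ i j, tpd (g i j) x t = -2 * Ric g ginv i j x t))

/-! ### Space-time objects -/

/-- A space-time connection on `M̃ = Ω × [0,T)`: the index `0` is time,
the index `i.succ` is the spatial direction `i`. -/
abbrev Con (n : ℕ) := Fin (n+1) → Fin (n+1) → Fin (n+1) → Fld n

/-- Space-time partial derivative: `∂₀ = ∂/∂t` and `∂_{i.succ} = ∂ᵢ`. -/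
def spdT (i : Fin (n+1)) (u : Fld n) : Fld n :=
  Fin.cases (tpd u) (fun j => spd j u) i

/-- Curvature of a space-time connection:
`R̃^l_{ijk} = ∂ᵢΓ̃^l_{jk} − ∂ⱼΓ̃^l_{ik} + Σ_m (Γ̃^m_{jk}Γ̃^l_{im} − Γ̃^m_{ik}Γ̃^l_{jm})`. -/
def RiemT (Γ : Con n) (l i j k : Fin (n+1)) : Fld n :=
  fun x t => spdT i (Γ l j k) x t - spdT j (Γ l i k) x t
    + ∑ m : Fin (n+1), (Γ m j k x t * Γ l i m x t - Γ m i k x t * Γ l j m x t)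

/-- Ricci tensor of a space-time connection: `R̃_{jk} = Σ_p R̃^p_{pjk}`. -/
def RicT (Γ : Con n) (j k : Fin (n+1)) : Fld n :=
  fun x t => ∑ p : Fin (n+1), RiemT Γ p p j k x t

/-- Space-time covariant derivative of a (0,2)-tensor with respect to a connection. -/
def cdT2 (Γ : Con n) (a : Fin (n+1)) (A : Fin (n+1) → Fin (n+1) → Fld n)
    (b c : Fin (n+1)) : Fld n :=
  fun x t => spdT a (A b c) x t - ∑ p : Fin (n+1), Γ p a b x t * A p c x t
    - ∑ p : Fin (n+1), Γ p a c x t * A b p x t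

/-- Space-time covariant derivative of a (1,1)-tensor with respect to a connection. -/
def cdT11 (Γ : Con n) (a : Fin (n+1)) (T : Fin (n+1) → Fin (n+1) → Fld n)
    (l j : Fin (n+1)) : Fld n :=
  fun x t => spdT a (T l j) x t + ∑ p : Fin (n+1), Γ l a p x t * T p j x t
    - ∑ p : Fin (n+1), Γ p a j x t * T l p x t

/-- Time shift of a field by `τ`. -/
def shift (τ : ℝ) (u : Fld n) : Fld n := fun x t => u x (t + τ)

/-- The degenerate inverse metric on space-time (no time shift):
`g̃^{ij} = g^{ij}` for spatial `i,j` and `g̃^{ij} = 0` if `i = 0` or `j = 0`. -/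
def gdegM (ginv : Met n) (i j : Fin (n+1)) : Fld n :=
  Fin.cases (fun _ _ => (0:ℝ))
    (fun i' => Fin.cases (fun _ _ => (0:ℝ)) (fun j' => ginv i' j') j) i

/-- The degenerate inverse metric `g̃_τ` on `M̃_τ`, shifted in time by `τ`. -/
def gdeg (ginv : Met n) (τ : ℝ) (i j : Fin (n+1)) : Fld n :=
  shift τ (gdegM ginv i j)

/-- The Chow–Chu connection `Γ̃_τ` on space-time, defined by (A1)–(A4)
(with time shift `τ`). -/
def GammaA (g ginv : Met n) (τ : ℝ) : Con n :=
  fun k i j =>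
    Fin.cases (fun _ _ => (0:ℝ))
      (fun k' =>
        Fin.cases
          (Fin.cases
            (shift τ (fun x t => -(1/2) * ∑ m, ginv k' m x t * spd m (Scal g ginv) x t))
            (fun j' => shift τ (fun x t => -(RicUp g ginv k' j' x t))) j)
          (fun i' =>
            Fin.cases (shift τ (fun x t => -(RicUp g ginv k' i' x t)))
              (fun j' => shift τ (Gamma g ginv k' i' j')) j) i) k

/-! ### The modified flow -/

/-- `∇ᵢ∇^k f = g^{km} ∇ᵢ∇ₘ f`. -/
def hessUp (g ginv : Met n) (f : Fld n) (i k : Fin n) : Fld n :=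
  fun x t => ∑ m, ginv k m x t * hess g ginv f i m x t

/-- `∇^p f = g^{pq} ∂_q f`. -/
def gradf (ginv : Met n) (f : Fld n) (p : Fin n) : Fld n :=
  fun x t => ∑ q, ginv p q x t * spd q f x t

/-- The potential `−½R + ∂f/∂t − ½|∇f|²`. -/
def Fpot (g ginv : Met n) (f : Fld n) : Fld n :=
  fun x t => -(1/2) * Scal g ginv x t + tpd f x t
    - (1/2) * ∑ p, ∑ q, ginv p q x t * spd p f x t * spd q f x t

/-- The space-time connection `Γ̃` of the modified flow, defined by (D1)–(D4). -/
def GammaD (g ginv : Met n) (f : Fld n) : Con n :=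
  fun k i j =>
    Fin.cases (fun _ _ => (0:ℝ))
      (fun k' =>
        Fin.cases
          (Fin.cases
            (fun x t => ∑ l, ginv k' l x t * spd l (Fpot g ginv f) x t)
            (fun j' => fun x t => -(RicUp g ginv k' j' x t) + hessUp g ginv f j' k' x t) j)
          (fun i' =>
            Fin.cases
              (fun x t => -(RicUp g ginv k' i' x t) + hessUp g ginv f i' k' x t)
              (fun j' => Gamma g ginv k' i' j') j) i) k

/-- Space-time Hessian `∇̃_a∇̃_b f = ∂_a∂_b f − Σ_p Γ̃^p_{ab} ∂_p f` (with `∂₀ = ∂/∂t`). -/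
def hessT (Γ : Con n) (f : Fld n) (a b : Fin (n+1)) : Fld n :=
  fun x t => spdT a (spdT b f) x t - ∑ p : Fin (n+1), Γ p a b x t * spdT p f x t

/-- Space-time Ricci tensor with first index raised by the degenerate metric:
`R̃^k_i = Σ_{p=1}^n g^{kp} R̃_{pi}` for spatial `k`, and `R̃^0_i = 0`. -/
def ricTup (ginv : Met n) (Γ : Con n) (k i : Fin (n+1)) : Fld n :=
  Fin.cases (fun _ _ => (0:ℝ))
    (fun k' => fun x t => ∑ p, ginv k' p x t * RicT Γ p.succ i x t) k

/-- `g` is a smooth solution of the modified Ricci flow with potential `f`: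
`∂g_{ij}/∂t = −2R_{ij} + 2∇ᵢ∇ⱼf` on `Ω × [0,T)`. -/
def ModifiedRicciFlow (Ωs : Set (Fin n → ℝ)) (T : ℝ) (g ginv : Met n) (f : Fld n) : Prop :=
  IsOpen Ωs ∧ IsConnected Ωs ∧ 0 < T ∧
  (∀ i j, ContDiffOn ℝ (⊤ : ℕ∞) (fun p : (Fin n → ℝ) × ℝ => g i j p.1 p.2)
      (Ωs ×ˢ Set.Ico 0 T)) ∧
  ContDiffOn ℝ (⊤ : ℕ∞) (fun p : (Fin n → ℝ) × ℝ => f p.1 p.2) (Ωs ×ˢ Set.Ico 0 T) ∧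
  (∀ x ∈ Ωs, ∀ t ∈ Set.Ico (0:ℝ) T,
    (∀ i j, g i j x t = g j i x t) ∧
    (∀ v : Fin n → ℝ, v ≠ 0 → 0 < ∑ i, ∑ j, g i j x t * v i * v j) ∧
    (∀ i j, ∑ k, g i k x t * ginv k j x t = (if i = j then (1:ℝ) else 0)) ∧
    (∀ i j, tpd (g i j) x t = -2 * Ric g ginv i j x t + 2 * hess g ginv f i j x t))

/-! ### The approximating metrics `g̃_{ε,δ}` -/

/-- The space-time metric `g̃_{ε,δ}`: spatial part `g`, `g̃_{00} = R + ε/(2(t+δ))`,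
mixed components zero. -/
def gE (g ginv : Met n) (ε δ : ℝ) (i j : Fin (n+1)) : Fld n :=
  Fin.cases
    (Fin.cases (fun x t => Scal g ginv x t + ε / (2 * (t + δ)))
      (fun _ => fun _ _ => (0:ℝ)) j)
    (fun i' => Fin.cases (fun _ _ => (0:ℝ)) (fun j' => g i' j') j) i

/-- The (block-diagonal) inverse of `g̃_{ε,δ}`. -/
def gEinv (g ginv : Met n) (ε δ : ℝ) (i j : Fin (n+1)) : Fld n :=
  Fin.cases
    (Fin.cases (fun x t => (Scal g ginv x t + ε / (2 * (t + δ)))⁻¹)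
      (fun _ => fun _ _ => (0:ℝ)) j)
    (fun i' => Fin.cases (fun _ _ => (0:ℝ)) (fun j' => ginv i' j') j) i

/-- The Levi-Civita Christoffel symbols of `g̃_{ε,δ}`:
`Γ̃^k_{ij} = ½ g̃^{kl}(∂ᵢg̃_{jl} + ∂ⱼg̃_{il} − ∂ₗg̃_{ij})`, indices in `0,…,n`. -/
def GammaE (g ginv : Met n) (ε δ : ℝ) : Con n :=
  fun k i j => fun x t => (1/2) * ∑ l : Fin (n+1), gEinv g ginv ε δ k l x t *
    (spdT i (gE g ginv ε δ j l) x t + spdT j (gE g ginv ε δ i l) x t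
      - spdT l (gE g ginv ε δ i j) x t)

end CC

set_option linter.unusedSectionVars false
namespace AbsRF
open Matrix

variable {A : Type*} [CommRing A] [Algebra ℝ A] {ι : Type*} [Fintype ι] [DecidableEq ι]

theorem two_cancel {a b : A} (h : 2 * a = 2 * b) : a = b := by
  have h2 : (algebraMap ℝ A (1/2)) * 2 = 1 := by
    have : (2 : A) = algebraMap ℝ A 2 := (map_ofNat (algebraMap ℝ A) 2).symm
    rw [this, ← map_mul]; norm_num
  calc a = (algebraMap ℝ A (1/2)) * 2 * a := by rw [h2, one_mul]
    _ = (algebraMap ℝ A (1/2)) * 2 * b := by rw [mul_assoc, h, mul_assoc]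
    _ = b := by rw [h2, one_mul]

/-- Entrywise derivation of a matrix. -/
def md (d : Derivation ℝ A A) (M : Matrix ι ι A) : Matrix ι ι A := fun i j => d (M i j)

theorem md_apply (d : Derivation ℝ A A) (M : Matrix ι ι A) (i j : ι) : md d M i j = d (M i j) := rfl

theorem md_add (d : Derivation ℝ A A) (M N : Matrix ι ι A) : md d (M + N) = md d M + md d N := by
  ext i j; simp [md]
theorem md_sub (d : Derivation ℝ A A) (M N : Matrix ι ι A) : md d (M - N) = md d M - md d N := by
  ext i j; simp [md]
theorem md_neg (d : Derivation ℝ A A) (M : Matrix ι ι A) : md d (-M) = -md d M := by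
  ext i j; simp [md]
theorem md_transpose (d : Derivation ℝ A A) (M : Matrix ι ι A) : md d Mᵀ = (md d M)ᵀ := by
  ext i j; simp [md]
theorem md_one (d : Derivation ℝ A A) : md d (1 : Matrix ι ι A) = 0 := by
  ext i j; simp only [md, Matrix.one_apply, Matrix.zero_apply]; split_ifs <;> simp
theorem md_mul (d : Derivation ℝ A A) (M N : Matrix ι ι A) :
    md d (M * N) = md d M * N + M * md d N := by
  ext i j
  simp only [md, Matrix.mul_apply, Matrix.add_apply, map_sum, Derivation.leibniz, smul_eq_mul,
    Finset.sum_add_distrib]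
  rw [add_comm]
  congr 1
  exact Finset.sum_congr rfl fun _ _ => mul_comm _ _
theorem md_comm {d e : Derivation ℝ A A} (h : ∀ a, d (e a) = e (d a)) (M : Matrix ι ι A) :
    md d (md e M) = md e (md d M) := by
  ext i j; simp [md, h]

/-- Algebraic data of a family of metrics with Levi-Civita connection. -/
structure Geo (A : Type*) [CommRing A] [Algebra ℝ A] (ι : Type*) [Fintype ι] [DecidableEq ι] where
  D : ι → Derivation ℝ A A
  Dt : Derivation ℝ A A
  comm : ∀ i j a, D i (D j a) = D j (D i a)
  commt : ∀ i a, Dt (D i a) = D i (Dt a)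
  G : Matrix ι ι A
  Gi : Matrix ι ι A
  Gsymm : Gᵀ = G
  GGi : G * Gi = 1
  Γ : ι → Matrix ι ι A
  tors : ∀ i l k, Γ i l k = Γ k l i
  compat : ∀ i, md (D i) G = (Γ i)ᵀ * G + G * Γ i

namespace Geo
variable (X : Geo A ι)

theorem GiG : X.Gi * X.G = 1 := mul_eq_one_comm.mp X.GGi
theorem Gisymm : X.Giᵀ = X.Gi := by
  have h : X.Giᵀ * X.G = 1 := by
    have := congrArg Matrix.transpose X.GGi
    rwa [Matrix.transpose_mul, X.Gsymm, Matrix.transpose_one] at this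
  calc X.Giᵀ = X.Giᵀ * (X.G * X.Gi) := by rw [X.GGi, mul_one]
    _ = X.Gi := by rw [← mul_assoc, h, one_mul]
theorem Gis (i j : ι) : X.Gi i j = X.Gi j i := by
  conv_lhs => rw [← X.Gisymm]
  rfl

theorem md_Gi (d : Derivation ℝ A A) : md d X.Gi = - X.Gi * md d X.G * X.Gi := by
  have h := congrArg (md d) X.GiG
  rw [md_mul, md_one] at h
  have h2 : md d X.Gi * X.G = - (X.Gi * md d X.G) := eq_neg_of_add_eq_zero_left h
  calc md d X.Gi = md d X.Gi * (X.G * X.Gi) := by rw [X.GGi, mul_one]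
    _ = - X.Gi * md d X.G * X.Gi := by rw [← mul_assoc, h2]; simp only [neg_mul]

def Rm (i j : ι) : Matrix ι ι A :=
  md (X.D i) (X.Γ j) - md (X.D j) (X.Γ i) + X.Γ i * X.Γ j - X.Γ j * X.Γ i

def Ric : Matrix ι ι A := fun j k => ∑ p, X.Rm p j p k

def du (a : ι) (M : Matrix ι ι A) : Matrix ι ι A := md (X.D a) M + X.Γ a * M - M * X.Γ a

def dl (a : ι) (M : Matrix ι ι A) : Matrix ι ι A := md (X.D a) M - (X.Γ a)ᵀ * M - M * X.Γ a

def S : Matrix ι ι A := X.Gi * X.Ric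

theorem Rm_anti (i j : ι) : X.Rm i j = - X.Rm j i := by
  unfold Rm; noncomm_ring

theorem Rm_anti' (i j l k : ι) : X.Rm i j l k = - X.Rm j i l k := by
  rw [X.Rm_anti i j]; rfl

theorem bianchi1 (i j k l : ι) : X.Rm i j l k + X.Rm j k l i + X.Rm k i l j = 0 := by
  have hs : ∀ a b c : ι, ∑ m, X.Γ a l m * X.Γ b m c = ∑ m, X.Γ a l m * X.Γ c m b := fun a b c =>
    Finset.sum_congr rfl fun m _ => by rw [X.tors b m c]
  simp only [Rm, Matrix.add_apply, Matrix.sub_apply, md_apply, Matrix.mul_apply]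
  rw [X.tors j l k, X.tors i l k, X.tors i l j, hs i j k, hs j i k, hs k i j]
  ring

theorem low_anti (i j : ι) : (X.Rm i j)ᵀ * X.G + X.G * X.Rm i j = 0 := by
  have h := md_comm (X.comm i j) X.G
  rw [X.compat, X.compat] at h
  simp only [md_add, md_mul, md_transpose, X.compat] at h
  have h2 := sub_eq_zero.mpr h
  rw [← h2]
  simp only [Rm, Matrix.transpose_sub, Matrix.transpose_add, Matrix.transpose_mul]
  noncomm_ring

theorem up_anti (i j : ι) : X.Gi * (X.Rm i j)ᵀ = - (X.Rm i j * X.Gi) := by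
  have h := X.low_anti i j
  have h1 : X.Gi * ((X.Rm i j)ᵀ * X.G + X.G * X.Rm i j) * X.Gi = 0 := by rw [h]; simp
  have h2 : X.Gi * ((X.Rm i j)ᵀ * X.G + X.G * X.Rm i j) * X.Gi
      = X.Gi * (X.Rm i j)ᵀ * (X.G * X.Gi) + (X.Gi * X.G) * X.Rm i j * X.Gi := by noncomm_ring
  rw [h2, X.GGi, X.GiG, mul_one, one_mul] at h1
  exact eq_neg_of_add_eq_zero_left h1

theorem trace_Rm (i j : ι) : ∑ p, X.Rm i j p p = 0 := by
  have h : Matrix.trace (X.Rm i j) = - Matrix.trace (X.Rm i j) := by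
    calc Matrix.trace (X.Rm i j) = Matrix.trace ((X.Rm i j)ᵀ * X.G * X.Gi) := by
          rw [mul_assoc, X.GGi, mul_one, Matrix.trace_transpose]
      _ = Matrix.trace (X.Gi * (X.Rm i j)ᵀ * X.G) := by
          rw [Matrix.trace_mul_comm, mul_assoc]
      _ = - Matrix.trace (X.Rm i j) := by
          rw [X.up_anti, neg_mul, mul_assoc, X.GiG, mul_one, Matrix.trace_neg]
  have : Matrix.trace (X.Rm i j) = 0 := two_cancel (by linear_combination h)
  exact this

theorem Ric_symm (j k : ι) : X.Ric j k = X.Ric k j := by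
  have h := X.trace_Rm j k
  have h2 : ∑ p, (X.Rm p j p k + X.Rm j k p p + X.Rm k p p j) = 0 :=
    Finset.sum_eq_zero fun p _ => X.bianchi1 p j k p
  have h3 : ∑ p, X.Rm k p p j = - X.Ric k j := by
    rw [Ric, ← Finset.sum_neg_distrib]
    exact Finset.sum_congr rfl fun p _ => X.Rm_anti' _ _ _ _
  rw [Finset.sum_add_distrib, Finset.sum_add_distrib, h, h3] at h2
  change X.Ric j k + 0 + _ = 0 at h2
  linear_combination h2

theorem Ric_transpose : X.Ricᵀ = X.Ric := by
  ext i j; exact X.Ric_symm j i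

/-- lowered Riemann -/
def L (i j : ι) : Matrix ι ι A := X.G * X.Rm i j

theorem L_anti1 (i j l k : ι) : X.L i j l k = - X.L j i l k := by
  simp only [L]; rw [X.Rm_anti i j, mul_neg]; rfl

theorem L_transpose (i j : ι) : (X.L i j)ᵀ = - X.L i j := by
  have := X.low_anti i j
  rw [L, Matrix.transpose_mul, X.Gsymm]
  exact eq_neg_of_add_eq_zero_left this

theorem L_anti2 (i j l k : ι) : X.L i j l k = - X.L i j k l := by
  have := congrFun (congrFun (X.L_transpose i j) k) l
  simpa using this

theorem L_bianchi1 (i j k l : ι) : X.L i j l k + X.L j k l i + X.L k i l j = 0 := by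
  simp only [L, Matrix.mul_apply]
  rw [← Finset.sum_add_distrib, ← Finset.sum_add_distrib]
  refine Finset.sum_eq_zero fun m _ => ?_
  linear_combination X.G l m * X.bianchi1 i j k m

/-- pair symmetry: `R_{ijkl}`. -/
theorem L_pair (i j k l : ι) : X.L i j l k = X.L k l j i := by
  apply two_cancel
  have e1 := X.L_bianchi1 i j k l
  have e2 := X.L_bianchi1 j k l i
  have e3 := X.L_bianchi1 k l i j
  have e4 := X.L_bianchi1 l i j k
  have a := X.L_anti1
  have b := X.L_anti2
  grind

theorem dl_apply (a : ι) (M : Matrix ι ι A) (j k : ι) : X.dl a M j k =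
    X.D a (M j k) - ∑ p, X.Γ a p j * M p k - ∑ p, X.Γ a p k * M j p := by
  simp only [dl, Matrix.sub_apply, md_apply, Matrix.mul_apply, Matrix.transpose_apply]
  congr 1
  exact Finset.sum_congr rfl fun _ _ => mul_comm _ _

theorem du_Gi (a : ι) (M : Matrix ι ι A) : X.du a (X.Gi * M) = X.Gi * X.dl a M := by
  unfold du dl
  rw [md_mul, md_Gi, X.compat]
  have h : X.Gi * ((X.Γ a)ᵀ * X.G + X.G * X.Γ a) * X.Gi
      = X.Gi * (X.Γ a)ᵀ * (X.G * X.Gi) + (X.Gi * X.G) * X.Γ a * X.Gi := by noncomm_ring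
  rw [neg_mul, neg_mul, h, X.GGi, X.GiG]
  noncomm_ring

theorem ricci_id (a b : ι) (M : Matrix ι ι A) :
    X.dl a (X.dl b M) - X.dl b (X.dl a M) = - (X.Rm a b)ᵀ * M - M * X.Rm a b := by
  have h := md_comm (X.comm a b) M
  simp only [dl, Rm, md_sub, md_mul, md_transpose, h, Matrix.transpose_sub, Matrix.transpose_add,
    Matrix.transpose_mul]
  noncomm_ring

theorem du_bianchi2 (a i j : ι) :
    X.du a (X.Rm i j) + X.du i (X.Rm j a) + X.du j (X.Rm a i) = 0 := by
  simp only [du, Rm, md_sub, md_add, md_mul, md_comm (X.comm i a), md_comm (X.comm j a),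
    md_comm (X.comm j i)]
  noncomm_ring

theorem dl_bianchi2 (a i j : ι) :
    X.dl a (X.L i j) + X.dl i (X.L j a) + X.dl j (X.L a i) = 0 := by
  have h : ∀ a i j, X.dl a (X.L i j) = X.G * X.du a (X.Rm i j) := by
    intro a i j
    have := X.du_Gi a (X.L i j)
    rw [L, ← mul_assoc, X.GiG, one_mul] at this
    rw [this, ← mul_assoc, X.GGi, one_mul]; rfl
  rw [h, h, h, ← mul_add, ← mul_add, X.du_bianchi2, mul_zero]

/-- metric trace of a lower matrix -/
def tr : Matrix ι ι A →ₗ[A] A where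
  toFun M := Matrix.trace (X.Gi * M)
  map_add' M N := by rw [mul_add, Matrix.trace_add]
  map_smul' c M := by rw [Matrix.mul_smul, Matrix.trace_smul]; rfl

theorem tr_apply (M : Matrix ι ι A) : X.tr M = Matrix.trace (X.Gi * M) := rfl

theorem tr_eq (M : Matrix ι ι A) : X.tr M = ∑ i, ∑ l, X.Gi i l * M i l := by
  rw [Finset.sum_comm]
  simp only [tr_apply, Matrix.trace, Matrix.diag, Matrix.mul_apply]
  exact Finset.sum_congr rfl fun l _ => Finset.sum_congr rfl fun i _ => by rw [X.Gis]

theorem tr_dl (a : ι) (M : Matrix ι ι A) : X.tr (X.dl a M) = X.D a (X.tr M) := by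
  rw [tr_apply, tr_apply, ← X.du_Gi]
  simp only [du, Matrix.trace_sub, Matrix.trace_add, Matrix.trace_mul_comm (X.Γ a)]
  simp [Matrix.trace, md_apply]

theorem tr_transpose (M : Matrix ι ι A) : X.tr Mᵀ = X.tr M := by
  rw [tr_apply, tr_apply, ← Matrix.trace_transpose, Matrix.transpose_mul, Matrix.transpose_transpose,
    X.Gisymm, Matrix.trace_mul_comm]

def N (a i j : ι) : Matrix ι ι A :=
  X.dl a (X.L i j) - ∑ m, X.Γ a m i • X.L m j - ∑ m, X.Γ a m j • X.L i m

theorem N_apply (a i j l k : ι) : X.N a i j l k =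
    X.D a (X.L i j l k) - ∑ p, X.Γ a p l * X.L i j p k - ∑ p, X.Γ a p k * X.L i j l p
     - ∑ m, X.Γ a m i * X.L m j l k - ∑ m, X.Γ a m j * X.L i m l k := by
  simp only [N, Matrix.sub_apply, Matrix.sum_apply, Matrix.smul_apply, smul_eq_mul, dl_apply]

theorem N_anti1 (a i j l k : ι) : X.N a i j l k = - X.N a j i l k := by
  rw [N_apply, N_apply, X.L_anti1 i j l k]
  simp only [X.L_anti1 i j, X.L_anti1 _ j, X.L_anti1 i _, mul_neg, Finset.sum_neg_distrib, map_neg]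
  ring

theorem N_anti2 (a i j l k : ι) : X.N a i j l k = - X.N a i j k l := by
  rw [N_apply, N_apply, X.L_anti2 i j l k]
  simp only [X.L_anti2 _ _ l _, X.L_anti2 _ _ _ k, mul_neg, Finset.sum_neg_distrib, map_neg]
  ring

theorem N_bianchi2 (a i j : ι) : X.N a i j + X.N i j a + X.N j a i = 0 := by
  rw [← X.dl_bianchi2 a i j]
  have h1 : ∀ a i j, ∑ m, X.Γ a m i • X.L m j = - ∑ m, X.Γ i m a • X.L j m := by
    intro a i j
    rw [← Finset.sum_neg_distrib]
    refine Finset.sum_congr rfl fun m _ => ?_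
    rw [X.tors a m i]
    ext l k
    simp [X.L_anti1 m j]
  simp only [N]
  rw [h1 a i j, h1 i j a, h1 j a i]
  abel

/-- covariant derivative of Ricci -/
def B (a : ι) : Matrix ι ι A := X.dl a X.Ric

theorem B_symm (a j k : ι) : X.B a j k = X.B a k j := by
  rw [B, dl_apply, dl_apply, X.Ric_symm j k]
  simp only [X.Ric_symm j, X.Ric_symm _ k]
  ring

def P (j k : ι) : Matrix ι ι A := fun i l => X.L i j l k

theorem tr_P (j k : ι) : X.tr (X.P j k) = X.Ric j k := by
  rw [tr_eq, Ric]
  refine Finset.sum_congr rfl fun i _ => ?_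
  have : X.Gi * X.L i j = X.Rm i j := by rw [L, ← mul_assoc, X.GiG, one_mul]
  rw [← this, Matrix.mul_apply]; rfl

theorem tr_N (a j k : ι) : ∑ i, ∑ l, X.Gi i l * X.N a i j l k = X.B a j k := by
  have h : (fun i l => X.N a i j l k : Matrix ι ι A)
      = X.dl a (X.P j k) - ∑ m, X.Γ a m j • X.P m k - ∑ m, X.Γ a m k • X.P j m := by
    ext i l
    simp only [Matrix.sub_apply, Matrix.sum_apply, Matrix.smul_apply, smul_eq_mul, dl_apply,
      N_apply, P]
    ring
  have h2 := X.tr_eq (fun i l => X.N a i j l k)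
  rw [← h2, h, map_sub, map_sub, tr_dl, map_sum, map_sum]
  simp only [map_smul, smul_eq_mul, tr_P]
  rw [B, dl_apply]

theorem sum4 (f : ι → ι → ι → ι → A) :
    ∑ j, ∑ k, ∑ i, ∑ l, f j k i l = ∑ i, ∑ l, ∑ j, ∑ k, f j k i l := by
  calc _ = ∑ x : ι × ι, ∑ y : ι × ι, f x.1 x.2 y.1 y.2 := by simp only [Fintype.sum_prod_type]
    _ = ∑ y : ι × ι, ∑ x : ι × ι, f x.1 x.2 y.1 y.2 := Finset.sum_comm
    _ = _ := by simp only [Fintype.sum_prod_type]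

theorem contracted (a : ι) : X.tr (X.B a) = 2 * ∑ j, ∑ k, X.Gi j k * X.B j k a := by
  have h0 : ∑ j, ∑ k, X.Gi j k * (∑ i, ∑ l, X.Gi i l *
      (X.N a i j l k + X.N i j a l k + X.N j a i l k)) = 0 := by
    refine Finset.sum_eq_zero fun j _ => Finset.sum_eq_zero fun k _ => ?_
    rw [Finset.sum_eq_zero, mul_zero]
    intro i _
    refine Finset.sum_eq_zero fun l _ => ?_
    have := congrFun (congrFun (X.N_bianchi2 a i j) l) k
    simp only [Matrix.add_apply, Matrix.zero_apply] at this
    rw [this, mul_zero]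
  simp only [mul_add, Finset.sum_add_distrib] at h0
  have e1 : ∑ j, ∑ k, X.Gi j k * (∑ i, ∑ l, X.Gi i l * X.N a i j l k) = X.tr (X.B a) := by
    rw [tr_eq]; simp only [tr_N]
  have e3 : ∑ j, ∑ k, X.Gi j k * (∑ i, ∑ l, X.Gi i l * X.N j a i l k)
      = - ∑ j, ∑ k, X.Gi j k * X.B j k a := by
    have : ∀ j k, (∑ i, ∑ l, X.Gi i l * X.N j a i l k) = - X.B j k a := by
      intro j k
      rw [X.B_symm, ← tr_N, ← Finset.sum_neg_distrib]
      refine Finset.sum_congr rfl fun i _ => ?_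
      rw [← Finset.sum_neg_distrib]
      refine Finset.sum_congr rfl fun l _ => ?_
      rw [X.N_anti1 j a i]; ring
    simp only [this, mul_neg, Finset.sum_neg_distrib]
  have e2 : ∑ j, ∑ k, X.Gi j k * (∑ i, ∑ l, X.Gi i l * X.N i j a l k)
      = - ∑ j, ∑ k, X.Gi j k * X.B j k a := by
    have h1 : ∑ j, ∑ k, X.Gi j k * (∑ i, ∑ l, X.Gi i l * X.N i j a l k)
        = ∑ i, ∑ l, X.Gi i l * (∑ j, ∑ k, X.Gi j k * X.N i j a l k) := by
      simp only [Finset.mul_sum]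
      rw [sum4]
      simp only [mul_left_comm]
    rw [h1]
    have : ∀ i l, (∑ j, ∑ k, X.Gi j k * X.N i j a l k) = - X.B i l a := by
      intro i l
      rw [X.B_symm, ← tr_N, ← Finset.sum_neg_distrib]
      refine Finset.sum_congr rfl fun j _ => ?_
      rw [← Finset.sum_neg_distrib]
      refine Finset.sum_congr rfl fun k _ => ?_
      rw [X.N_anti2]; ring
    simp only [this, mul_neg, Finset.sum_neg_distrib]
  rw [e1, e2, e3] at h0
  linear_combination h0

/-- second covariant derivative of Ricci -/
def H (a b : ι) : Matrix ι ι A := X.dl a (X.B b) - ∑ m, X.Γ a m b • X.B m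

theorem H_apply (a b j k : ι) : X.H a b j k =
    X.D a (X.B b j k) - ∑ p, X.Γ a p j * X.B b p k - ∑ p, X.Γ a p k * X.B b j p
     - ∑ m, X.Γ a m b * X.B m j k := by
  simp only [H, Matrix.sub_apply, Matrix.sum_apply, Matrix.smul_apply, smul_eq_mul, dl_apply]

theorem H_symm (a b j k : ι) : X.H a b j k = X.H a b k j := by
  rw [H_apply, H_apply, X.B_symm b j k]
  simp only [X.B_symm b j _, X.B_symm b _ k, X.B_symm _ j k]
  ring

theorem H_comm (a b : ι) : X.H a b - X.H b a = - (X.Rm a b)ᵀ * X.Ric - X.Ric * X.Rm a b := by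
  rw [← X.ricci_id a b X.Ric]
  simp only [H, B, X.tors a _ b]
  abel

/-- `g^{pl} ∇_j ∇_p R_{lk}` -/
def e (j k : ι) : A := ∑ p, ∑ l, X.Gi p l * X.H j p l k

theorem tr_H (j k : ι) : X.tr (X.H j k) = 2 * X.e j k := by
  obtain ⟨Bp, hBp⟩ : ∃ M : ι → Matrix ι ι A, ∀ k p l, M k p l = X.B p l k :=
    ⟨fun k p l => X.B p l k, fun _ _ _ => rfl⟩
  have hB : ∀ k, X.tr (X.B k - (2 : A) • Bp k) = 0 := by
    intro k
    rw [map_sub, X.contracted, map_smul, X.tr_eq (Bp k), smul_eq_mul]; simp only [hBp, sub_self]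
  obtain ⟨Hp, hHp⟩ : ∃ M : Matrix ι ι A, ∀ p l, M p l = X.H j p l k :=
    ⟨fun p l => X.H j p l k, fun _ _ => rfl⟩
  have h1 : X.H j k - (2 : A) • Hp
      = X.dl j (X.B k - (2 : A) • Bp k) - ∑ m, X.Γ j m k • (X.B m - (2 : A) • Bp m) := by
    ext p l
    simp only [Matrix.sub_apply, Matrix.sum_apply, Matrix.smul_apply, smul_eq_mul, dl_apply,
      hHp, H_apply, hBp, map_sub, Derivation.leibniz, mul_sub, Finset.sum_sub_distrib, Finset.mul_sum,
      mul_left_comm _ (2 : A)]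
    have : X.D j (2 : A) = 0 := by
      rw [← map_ofNat (algebraMap ℝ A) 2]; exact Derivation.map_algebraMap _ _
    rw [this]
    simp only [mul_zero, add_zero]
    ring
  have h2 := congrArg X.tr h1
  rw [map_sub, map_sub, tr_dl, hB, map_zero, map_sum] at h2
  simp only [map_smul, hB, smul_zero, Finset.sum_const_zero, sub_zero] at h2
  rw [X.tr_eq Hp, smul_eq_mul] at h2
  simp only [hHp] at h2
  exact sub_eq_zero.mp h2

def Q (j k : ι) : A := ∑ p, ∑ m, X.S p m * X.Rm p j m k

theorem Q_eq (j k : ι) : X.Q j k = ∑ p, ∑ m, (X.S * X.Gi) p m * X.L p j m k := by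
  unfold Q
  refine Finset.sum_congr rfl fun p _ => ?_
  have h : X.Rm p j = X.Gi * X.L p j := by rw [L, ← mul_assoc, X.GiG, one_mul]
  rw [h]
  have h1 : ∀ M : Matrix ι ι A, ∀ K : Matrix ι ι A, ∑ m, M p m * K m k = (M * K) p k := by
    intro M K; rw [Matrix.mul_apply]
  rw [h1, h1, mul_assoc]

theorem SGi_symm (p m : ι) : (X.S * X.Gi) p m = (X.S * X.Gi) m p := by
  have : (X.S * X.Gi)ᵀ = X.S * X.Gi := by
    rw [S, Matrix.transpose_mul, Matrix.transpose_mul, X.Gisymm, X.Ric_transpose, mul_assoc]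
  exact congrFun (congrFun this m) p

theorem Q_symm (j k : ι) : X.Q j k = X.Q k j := by
  rw [Q_eq, Q_eq, Finset.sum_comm]
  refine Finset.sum_congr rfl fun m _ => Finset.sum_congr rfl fun p _ => ?_
  rw [X.SGi_symm p m, X.L_pair p j k m, X.L_anti1 k m, X.L_anti2 m k]
  ring

theorem contr_comm (j k : ι) : ∑ p, ∑ l, X.Gi p l * X.H p j l k
    = X.e j k + (X.Ric * X.Gi * X.Ric) j k - X.Q j k := by
  have h : ∀ p l, X.H p j l k = X.H j p l k - ((X.Rm p j)ᵀ * X.Ric) l k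
      - (X.Ric * X.Rm p j) l k := by
    intro p l
    have := congrFun (congrFun (X.H_comm p j) l) k
    simp only [Matrix.sub_apply, neg_mul, Matrix.neg_apply] at this
    linear_combination this
  simp only [h, mul_sub, Finset.sum_sub_distrib]
  have h1 : ∑ p, ∑ l, X.Gi p l * ((X.Rm p j)ᵀ * X.Ric) l k = - (X.Ric * X.Gi * X.Ric) j k := by
    have : ∀ p, ∑ l, X.Gi p l * ((X.Rm p j)ᵀ * X.Ric) l k
        = - ∑ q, X.Rm p j p q * (X.Gi * X.Ric) q k := by
      intro p
      rw [← Matrix.mul_apply, ← Matrix.mul_apply, ← mul_assoc, X.up_anti, neg_mul, mul_assoc]; rfl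
    simp only [this, Finset.sum_neg_distrib]
    rw [Finset.sum_comm, mul_assoc, Matrix.mul_apply]
    simp only [Ric, Finset.sum_mul]
  have h2 : ∑ p, ∑ l, X.Gi p l * (X.Ric * X.Rm p j) l k = X.Q j k := by
    unfold Q
    refine Finset.sum_congr rfl fun p _ => ?_
    rw [← Matrix.mul_apply, ← Matrix.mul_apply, ← mul_assoc]; rfl
  rw [h1, h2, e]; ring

/-! flow -/
def C (j : ι) : Matrix ι ι A := md X.Dt (X.Γ j)

def E (j : ι) : Matrix ι ι A := fun l k => - X.B j l k - X.B k l j + X.B l j k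

theorem C_compat (hf : md X.Dt X.G = - (X.Ric + X.Ric)) (i : ι) : X.G * X.C i + (X.C i)ᵀ * X.G = - (X.B i + X.B i) := by
  have h := congrArg (md X.Dt) (X.compat i)
  rw [md_comm (X.commt i), hf, md_add, md_mul, md_mul, hf, md_neg, md_add, md_transpose] at h
  have h2 : X.G * md X.Dt (X.Γ i) + (md X.Dt (X.Γ i))ᵀ * X.G =
      -(md (X.D i) X.Ric + md (X.D i) X.Ric) - (X.Γ i)ᵀ * -(X.Ric + X.Ric)
        - (-(X.Ric + X.Ric)) * X.Γ i := by
    rw [h]; abel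
  rw [C, h2, B, dl]
  noncomm_ring

theorem GC (hf : md X.Dt X.G = - (X.Ric + X.Ric)) (j : ι) : X.G * X.C j = X.E j := by
  have hc : ∀ i l k, (X.G * X.C i) l k + (X.G * X.C i) k l = - (X.B i l k + X.B i l k) := by
    intro i l k
    have h1 := congrFun (congrFun (X.C_compat hf i) l) k
    have h2 : (X.C i)ᵀ * X.G = (X.G * X.C i)ᵀ := by rw [Matrix.transpose_mul, X.Gsymm]
    rw [h2] at h1
    exact h1
  have ht : ∀ i l k, (X.G * X.C i) l k = (X.G * X.C k) l i := by
    intro i l k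
    rw [Matrix.mul_apply, Matrix.mul_apply]
    refine Finset.sum_congr rfl fun m _ => ?_
    simp only [C, md_apply]
    rw [X.tors i m k]
  ext l k
  apply two_cancel
  simp only [E]
  have b1 := X.B_symm j l k
  linear_combination hc j l k + hc k l j - hc l j k + ht j l k - ht j k l
    - ht k j l

theorem C_eq (hf : md X.Dt X.G = - (X.Ric + X.Ric)) (j : ι) : X.C j = X.Gi * X.E j := by
  rw [← X.GC hf, ← mul_assoc, X.GiG, one_mul]

theorem Dt_Rm (i j : ι) : md X.Dt (X.Rm i j) = X.du i (X.C j) - X.du j (X.C i) := by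
  simp only [Rm, du, C, md_sub, md_add, md_mul, md_comm (X.commt _)]
  noncomm_ring

theorem F_apply (a j l k : ι) : X.dl a (X.E j) l k - ∑ m, X.Γ a m j * X.E m l k
    = - X.H a j l k - X.H a k l j + X.H a l j k := by
  simp only [dl_apply, H_apply, E, map_sub, map_add, map_neg, mul_sub, mul_add, mul_neg,
    Finset.sum_sub_distrib, Finset.sum_add_distrib, Finset.sum_neg_distrib]
  ring

def lapRic : Matrix ι ι A := ∑ p, ∑ l, X.Gi p l • X.H p l

theorem lapRic_apply (j k : ι) : X.lapRic j k = ∑ p, ∑ l, X.Gi p l * X.H p l j k := by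
  simp [lapRic, Matrix.sum_apply]

theorem lapRic_symm (j k : ι) : X.lapRic j k = X.lapRic k j := by
  rw [lapRic_apply, lapRic_apply]
  exact Finset.sum_congr rfl fun p _ => Finset.sum_congr rfl fun l _ => by rw [X.H_symm p l j k]

theorem Dt_Ric_aux (hf : md X.Dt X.G = - (X.Ric + X.Ric)) (j k : ι) : X.Dt (X.Ric j k) = ∑ p, ∑ l, X.Gi p l *
    (X.H p l j k - X.H p j l k - X.H p k l j + X.H j p l k + X.H j k p l - X.H j l p k) := by
  rw [Ric, map_sum]
  refine Finset.sum_congr rfl fun p _ => ?_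
  have h := congrFun (congrFun (X.Dt_Rm p j) p) k
  rw [md_apply] at h
  rw [h, X.C_eq hf, X.C_eq hf, du_Gi, du_Gi, Matrix.sub_apply, Matrix.mul_apply, Matrix.mul_apply,
    ← Finset.sum_sub_distrib]
  refine Finset.sum_congr rfl fun l _ => ?_
  have h1 := X.F_apply p j l k
  have h2 := X.F_apply j p l k
  simp only [X.tors j _ p] at h2
  rw [X.H_symm j k p l]
  linear_combination X.Gi p l * (h1 - h2)

theorem RGR_symm (j k : ι) : (X.Ric * X.Gi * X.Ric) j k = (X.Ric * X.Gi * X.Ric) k j := by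
  have : (X.Ric * X.Gi * X.Ric)ᵀ = X.Ric * X.Gi * X.Ric := by
    rw [Matrix.transpose_mul, Matrix.transpose_mul, X.Gisymm, X.Ric_transpose, mul_assoc]
  exact congrFun (congrFun this k) j

theorem Dt_Ric (hf : md X.Dt X.G = - (X.Ric + X.Ric)) (j k : ι) : X.Dt (X.Ric j k) = X.lapRic j k
    - 2 * (X.Ric * X.Gi * X.Ric) j k + 2 * X.Q j k := by
  have key : ∀ j k, X.Dt (X.Ric j k) = X.lapRic j k + X.e j k - X.e k j
      - 2 * (X.Ric * X.Gi * X.Ric) j k + 2 * X.Q j k := by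
    intro j k
    rw [X.Dt_Ric_aux hf]
    simp only [mul_sub, mul_add, Finset.sum_sub_distrib, Finset.sum_add_distrib]
    rw [X.contr_comm j k, X.contr_comm k j, ← X.lapRic_apply, ← X.tr_eq, X.tr_H]
    have h6 : ∑ p, ∑ l, X.Gi p l * X.H j l p k = X.e j k := by
      rw [Finset.sum_comm, e]
      exact Finset.sum_congr rfl fun p _ => Finset.sum_congr rfl fun l _ => by rw [X.Gis]
    have h4 : ∑ p, ∑ l, X.Gi p l * X.H j p l k = X.e j k := rfl
    rw [h6, h4, X.Q_symm k j, X.RGR_symm k j]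
    ring
  apply two_cancel
  have h1 := key j k
  have h2 := key k j
  rw [X.Ric_symm k j, X.lapRic_symm k j, X.Q_symm k j, X.RGR_symm k j] at h2
  linear_combination h1 + h2

/-- rough Laplacian on (1,1)-tensors -/
def lapU (M : Matrix ι ι A) : Matrix ι ι A :=
  ∑ p, ∑ q, X.Gi p q • (X.du p (X.du q M) - ∑ m, X.Γ p m q • X.du m M)

theorem lapU_S : X.lapU X.S = X.Gi * X.lapRic := by
  simp only [lapU, lapRic, S, du_Gi, Finset.mul_sum, Matrix.mul_smul, H, B, mul_sub]

theorem Dt_S (hf : md X.Dt X.G = - (X.Ric + X.Ric)) (l i : ι) : X.Dt (X.S l i) = X.lapU X.S l i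
    + 2 * ∑ m, X.Gi l m * X.Q i m := by
  have h : md X.Dt X.S = (X.Gi * X.Ric * X.Gi * X.Ric + X.Gi * X.Ric * X.Gi * X.Ric)
      + X.Gi * md X.Dt X.Ric := by
    rw [S, md_mul, md_Gi, hf]; noncomm_ring
  obtain ⟨Qm, hQm⟩ : ∃ M : Matrix ι ι A, ∀ j k, M j k = X.Q j k :=
    ⟨fun j k => X.Q j k, fun _ _ => rfl⟩
  have h2 : md X.Dt X.Ric = X.lapRic - (X.Ric * X.Gi * X.Ric + X.Ric * X.Gi * X.Ric)
      + (Qm + Qm) := by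
    ext j k
    simp only [md_apply, Matrix.add_apply, Matrix.sub_apply, hQm]
    rw [X.Dt_Ric hf]; ring
  have h3 : md X.Dt X.S = X.lapU X.S
    + (X.Gi * Qm + X.Gi * Qm) := by
    rw [h, h2, lapU_S]; noncomm_ring
  have h4 := congrFun (congrFun h3 l) i
  rw [md_apply] at h4
  rw [h4, Matrix.add_apply, Matrix.add_apply, Matrix.mul_apply, two_mul]
  simp only [X.Q_symm i, hQm]

/-- evolution of the Christoffel symbols -/
theorem Dt_Γ (hf : md X.Dt X.G = - (X.Ric + X.Ric)) (l j k : ι) : X.Dt (X.Γ j l k) =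
    - X.du j X.S l k - X.du k X.S l j + ∑ m, X.Gi l m * X.B m j k := by
  have h := congrFun (congrFun (X.C_eq hf j) l) k
  have hS : ∀ a l k, X.du a X.S l k = ∑ m, X.Gi l m * X.B a m k := by
    intro a l k; rw [S, du_Gi, Matrix.mul_apply]; rfl
  rw [C, md_apply, Matrix.mul_apply] at h
  rw [h, hS, hS, ← Finset.sum_neg_distrib, ← Finset.sum_sub_distrib, ← Finset.sum_add_distrib]
  exact Finset.sum_congr rfl fun m _ => by simp only [E]; ring

end Geo

/-- The geometry of a smooth family of metrics, with its Levi-Civita connection. -/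
def ofMetric (D : ι → Derivation ℝ A A) (Dt : Derivation ℝ A A)
    (comm : ∀ i j a, D i (D j a) = D j (D i a)) (commt : ∀ i a, Dt (D i a) = D i (Dt a))
    (G Gi : Matrix ι ι A) (Gsymm : Gᵀ = G) (GGi : G * Gi = 1) : Geo A ι where
  D := D
  Dt := Dt
  comm := comm
  commt := commt
  G := G
  Gi := Gi
  Gsymm := Gsymm
  GGi := GGi
  Γ := fun i k j => (1/2 : ℝ) • ∑ l, Gi k l * (D i (G j l) + D j (G i l) - D l (G i j))
  tors := by
    intro i l k
    have hs : ∀ a b, G a b = G b a := fun a b => congrFun (congrFun Gsymm b) a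
    congr 1
    refine Finset.sum_congr rfl fun m _ => ?_
    rw [hs i k]; ring
  compat := by
    intro i
    have hs : ∀ a b, G a b = G b a := fun a b => congrFun (congrFun Gsymm b) a
    have key : ∀ a j, ∑ k, G a k * ((1/2 : ℝ) • ∑ l, Gi k l *
        (D i (G j l) + D j (G i l) - D l (G i j)))
        = (1/2 : ℝ) • (D i (G j a) + D j (G i a) - D a (G i j)) := by
      intro a j
      have h1 : ∀ w : ι → A, ∑ k, G a k * ((1/2 : ℝ) • ∑ l, Gi k l * w l)
          = (1/2 : ℝ) • (((G * Gi).mulVec w) a) := by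
        intro w
        rw [← Matrix.mulVec_mulVec]
        simp only [Matrix.mulVec, dotProduct, mul_smul_comm]
        rw [Finset.smul_sum]
      rw [h1 (fun l => D i (G j l) + D j (G i l) - D l (G i j)), GGi, Matrix.one_mulVec]
    ext j k
    change D i (G j k) = (∑ m, ((1/2 : ℝ) • ∑ l, Gi m l *
        (D i (G j l) + D j (G i l) - D l (G i j))) * G m k)
      + ∑ m, G j m * ((1/2 : ℝ) • ∑ l, Gi m l *
        (D i (G k l) + D k (G i l) - D l (G i k)))
    rw [key j k]
    have h2 := key k j
    rw [Finset.sum_congr rfl fun m _ => by rw [mul_comm _ (G m k), hs m k], h2, ← smul_add]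
    rw [hs k j, hs i k, hs i j]
    have e2 : (D i (G j k) + D j (G k i) - D k (G j i)) + (D i (G j k) + D k (G j i) - D j (G k i))
      = (2 : ℝ) • D i (G j k) := by rw [two_smul]; ring
    rw [e2, smul_smul]; norm_num

end AbsRF
namespace SmA
open scoped ContDiff Topology

variable {V : Type*} [NormedAddCommGroup V] [NormedSpace ℝ V]

open Classical in
/-- extension by zero -/
def ext0 (U : Set V) (f : U → ℝ) : V → ℝ := fun p => if h : p ∈ U then f ⟨p, h⟩ else 0

theorem ext0_of_mem {U : Set V} (f : U → ℝ) {p : V} (h : p ∈ U) : ext0 U f p = f ⟨p, h⟩ := by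
  simp [ext0, h]

/-- smooth functions on `U` -/
def SA (U : Set V) : Subalgebra ℝ (U → ℝ) where
  carrier := {f | ContDiffOn ℝ ∞ (ext0 U f) U}
  mul_mem' := by
    intro a b ha hb
    refine (ContDiffOn.mul ha hb).congr fun p hp => ?_
    simp [ext0_of_mem _ hp]
  add_mem' := by
    intro a b ha hb
    refine (ContDiffOn.add ha hb).congr fun p hp => ?_
    simp [ext0_of_mem _ hp]
  algebraMap_mem' := by
    intro r
    refine (contDiffOn_const (c := r)).congr fun p hp => ?_
    simp [ext0_of_mem _ hp]

variable {U : Set V}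

/-- restriction of a smooth function -/
def mk (F : V → ℝ) (hF : ContDiffOn ℝ ∞ F U) : SA U :=
  ⟨fun p => F p, hF.congr fun p hp => by simp [ext0_of_mem _ hp]⟩

def ev (p : U) : SA U →ₐ[ℝ] ℝ where
  toFun a := a.1 p
  map_one' := rfl
  map_mul' _ _ := rfl
  map_zero' := rfl
  map_add' _ _ := rfl
  commutes' _ := rfl

theorem ev_ext {a b : SA U} (h : ∀ p, ev p a = ev p b) : a = b :=
  Subtype.ext (funext h)

theorem ext0_ev (a : SA U) {p : V} (h : p ∈ U) : ext0 U a.1 p = ev ⟨p, h⟩ a := ext0_of_mem _ h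

theorem diffAt (hU : IsOpen U) (a : SA U) {p : V} (h : p ∈ U) :
    DifferentiableAt ℝ (ext0 U a.1) p :=
  (a.2.contDiffAt (hU.mem_nhds h)).differentiableAt (by simp)

theorem evEq (hU : IsOpen U) {F G : V → ℝ} (h : ∀ p ∈ U, F p = G p) {p : V} (hp : p ∈ U) :
    F =ᶠ[𝓝 p] G := Filter.eventually_of_mem (hU.mem_nhds hp) h

def Dfun (hU : IsOpen U) (v : V) (a : SA U) : SA U :=
  mk (fun p => fderiv ℝ (ext0 U a.1) p v)
    ((ContDiffOn.fderiv_of_isOpen a.2 hU (by simp)).clm_apply contDiffOn_const)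

theorem ev_Dfun (hU : IsOpen U) (v : V) (a : SA U) (p : U) :
    ev p (Dfun hU v a) = fderiv ℝ (ext0 U a.1) p v := rfl

/-- directional derivative as a derivation -/
def Dv (hU : IsOpen U) (v : V) : Derivation ℝ (SA U) (SA U) :=
  Derivation.mk'
    { toFun := Dfun hU v
      map_add' := by
        intro a b
        apply ev_ext
        rintro ⟨p, hp⟩
        rw [map_add, ev_Dfun, ev_Dfun, ev_Dfun]
        have h : ext0 U (a + b).1 =ᶠ[𝓝 p] (ext0 U a.1 + ext0 U b.1) :=
          evEq hU (fun q hq => by simp [ext0_of_mem _ hq]) hp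
        rw [h.fderiv_eq, fderiv_add (diffAt hU a hp) (diffAt hU b hp)]
        rfl
      map_smul' := by
        intro c a
        apply ev_ext
        rintro ⟨p, hp⟩
        rw [map_smul, ev_Dfun]
        have h : ext0 U (c • a).1 =ᶠ[𝓝 p] (c • ext0 U a.1) :=
          evEq hU (fun q hq => by simp [ext0_of_mem _ hq]) hp
        rw [h.fderiv_eq, fderiv_const_smul (diffAt hU a hp)]
        rfl }
    (by
      intro a b
      apply ev_ext
      rintro ⟨p, hp⟩
      change ev _ (Dfun hU v (a * b)) = ev _ (a * Dfun hU v b + b * Dfun hU v a)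
      rw [map_add, map_mul, map_mul, ev_Dfun, ev_Dfun, ev_Dfun]
      have h : ext0 U (a * b).1 =ᶠ[𝓝 p] (ext0 U a.1 * ext0 U b.1) :=
        evEq hU (fun q hq => by simp [ext0_of_mem _ hq]) hp
      rw [h.fderiv_eq, fderiv_mul (diffAt hU a hp) (diffAt hU b hp)]
      rw [← ext0_ev a hp, ← ext0_ev b hp]
      rfl)

theorem ev_Dv (hU : IsOpen U) (v : V) (a : SA U) (p : U) :
    ev p (Dv hU v a) = fderiv ℝ (ext0 U a.1) p v := rfl

theorem Dv_comm (hU : IsOpen U) (v w : V) (a : SA U) :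
    Dv hU v (Dv hU w a) = Dv hU w (Dv hU v a) := by
  apply ev_ext
  rintro ⟨p, hp⟩
  have key : ∀ v w, ev ⟨p, hp⟩ (Dv hU v (Dv hU w a))
      = fderiv ℝ (fderiv ℝ (ext0 U a.1)) p v w := by
    intro v w
    rw [ev_Dv]
    have h : ext0 U (Dv hU w a).1 =ᶠ[𝓝 p] fun q => fderiv ℝ (ext0 U a.1) q w :=
      evEq hU (fun q hq => by rw [ext0_of_mem _ hq]; rfl) hp
    have hd : DifferentiableAt ℝ (fderiv ℝ (ext0 U a.1)) p :=
      ((ContDiffOn.fderiv_of_isOpen (m := 1) a.2 hU (by norm_cast)).contDiffAt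
        (hU.mem_nhds hp)).differentiableAt (by simp)
    rw [h.fderiv_eq]
    change fderiv ℝ (fun q => fderiv ℝ (ext0 U a.1) q w) p v = _
    rw [fderiv_clm_apply hd (differentiableAt_const _)]
    simp
  rw [key, key]
  exact (a.2.contDiffAt (hU.mem_nhds hp)).isSymmSndFDerivAt
    (by rw [minSmoothness_of_isRCLikeNormedField]; exact WithTop.coe_le_coe.2 (le_top (a := (2 : ℕ∞)))) v w

theorem isUnit_of (a : SA U) (h : ∀ p, ev p a ≠ 0) : IsUnit a := by
  refine IsUnit.of_mul_eq_one (mk (fun p => (ext0 U a.1 p)⁻¹) ?_) ?_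
  · refine ContDiffOn.inv a.2 fun p hp => ?_
    rw [ext0_ev a hp]; exact h _
  · apply ev_ext
    rintro ⟨p, hp⟩
    rw [map_mul, map_one]
    change _ * (ext0 U a.1 p)⁻¹ = 1
    rw [ext0_ev a hp]
    exact mul_inv_cancel₀ (h _)

/-! space-time -/
variable {n : ℕ} {W : Set ((Fin n → ℝ) × ℝ)}

/-- the field `u` is represented on `W` by `a` -/
def Rep (u : CC.Fld n) (a : SA W) : Prop :=
  ∀ x t (h : (x, t) ∈ W), u x t = ev ⟨(x, t), h⟩ a

abbrev Ds (hW : IsOpen W) (i : Fin n) : Derivation ℝ (SA W) (SA W) := Dv hW (Pi.single i 1, 0)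
abbrev Dtt (hW : IsOpen W) : Derivation ℝ (SA W) (SA W) := Dv hW (0, 1)

theorem Rep.spd (hW : IsOpen W) {u : CC.Fld n} {a : SA W} (h : Rep u a) (i : Fin n) :
    Rep (CC.spd i u) (Ds hW i a) := by
  intro x t hx
  rw [ev_Dv, CC.spd]
  have h1 : (fun y => u y t) =ᶠ[𝓝 x] fun y => ext0 W a.1 (y, t) := by
    have hc : Filter.Tendsto (fun y : Fin n → ℝ => (y, t)) (𝓝 x) (𝓝 (x, t)) :=
      (Continuous.prodMk_left t).continuousAt
    filter_upwards [hc.eventually (hW.mem_nhds hx)] with y hy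
    rw [h y t hy, ext0_ev a hy]
  rw [h1.fderiv_eq]
  have h2 := (diffAt hW a hx).hasFDerivAt.comp x (hasFDerivAt_prodMk_left (𝕜 := ℝ) x t)
  have h3 := h2.fderiv
  simp only [Function.comp_def] at h3
  rw [h3]; simp

theorem Rep.tpd (hW : IsOpen W) {u : CC.Fld n} {a : SA W} (h : Rep u a) :
    Rep (CC.tpd u) (Dtt hW a) := by
  intro x t hx
  rw [ev_Dv, CC.tpd]
  have h1 : (fun s => u x s) =ᶠ[𝓝 t] fun s => ext0 W a.1 (x, s) := by
    have hc : Filter.Tendsto (fun s : ℝ => (x, s)) (𝓝 t) (𝓝 (x, t)) :=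
      (Continuous.prodMk_right x).continuousAt
    filter_upwards [hc.eventually (hW.mem_nhds hx)] with y hy
    rw [h x y hy, ext0_ev a hy]
  rw [h1.deriv_eq, ← fderiv_apply_one_eq_deriv]
  have h2 := (diffAt hW a hx).hasFDerivAt.comp t (hasFDerivAt_prodMk_right (𝕜 := ℝ) x t)
  have h3 := h2.fderiv
  simp only [Function.comp_def] at h3
  rw [h3]; simp

end SmA
namespace SmA
open scoped ContDiff Topology
open AbsRF
variable {n : ℕ} {W : Set ((Fin n → ℝ) × ℝ)}

/-- `X` models the geometry of `g` on `W`. -/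
structure Model (hW : IsOpen W) (g ginv : CC.Met n) (X : Geo (SA W) (Fin n)) : Prop where
  hD : ∀ i, X.D i = Ds hW i
  hDt : X.Dt = Dtt hW
  hG : ∀ i j, Rep (g i j) (X.G i j)
  hGi : ∀ i j, Rep (ginv i j) (X.Gi i j)
  hΓ : ∀ k i j, Rep (CC.Gamma g ginv k i j) (X.Γ i k j)
  hf : md X.Dt X.G = - (X.Ric + X.Ric)

theorem rep_Riem {hW : IsOpen W} {g ginv : CC.Met n} {X : Geo (SA W) (Fin n)}
    (hD : ∀ i, X.D i = Ds hW i)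
    (hΓ : ∀ k i j, Rep (CC.Gamma g ginv k i j) (X.Γ i k j)) (l i j k : Fin n) :
    Rep (CC.Riem g ginv l i j k) (X.Rm i j l k) := by
  intro x t h
  simp only [CC.Riem, fun l i j k => (hΓ l j k).spd hW i x t h, fun k i j => hΓ k i j x t h,
    Geo.Rm, Matrix.add_apply, Matrix.sub_apply, md_apply, Matrix.mul_apply, hD, map_add, map_sub,
    map_sum, map_mul, Finset.sum_sub_distrib, mul_comm]
  ring

theorem rep_Ric {hW : IsOpen W} {g ginv : CC.Met n} {X : Geo (SA W) (Fin n)}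
    (hD : ∀ i, X.D i = Ds hW i)
    (hΓ : ∀ k i j, Rep (CC.Gamma g ginv k i j) (X.Γ i k j)) (j k : Fin n) :
    Rep (CC.Ric g ginv j k) (X.Ric j k) := by
  intro x t h
  simp only [CC.Ric, Geo.Ric, map_sum, fun l i j k => rep_Riem hD hΓ l i j k x t h]

theorem exists_model {Ωs : Set (Fin n → ℝ)} {T : ℝ} {g ginv : CC.Met n}
    (hg : CC.RicciFlow Ωs T g ginv) (hW : IsOpen (Ωs ×ˢ Set.Ioo 0 T)) :
    ∃ X : Geo (SA (Ωs ×ˢ Set.Ioo 0 T)) (Fin n), Model hW g ginv X := by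
  obtain ⟨-, -, -, hsm, hpt⟩ := hg
  have hpt' : ∀ p ∈ Ωs ×ˢ Set.Ioo 0 T, _ := fun p hp =>
    hpt p.1 hp.1 p.2 ⟨hp.2.1.le, hp.2.2⟩
  obtain ⟨G, hG⟩ : ∃ G : Matrix (Fin n) (Fin n) (SA (Ωs ×ˢ Set.Ioo 0 T)),
      ∀ i j, Rep (g i j) (G i j) :=
    ⟨fun i j => mk (fun p => g i j p.1 p.2)
      ((hsm i j).mono (Set.prod_mono_right Set.Ioo_subset_Ico_self)), fun i j x t h => rfl⟩
  have hinv : ∀ p : (Ωs ×ˢ Set.Ioo 0 T : Set _), (G.map (ev p)) *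
      (Matrix.of fun i j => ginv i j p.1.1 p.1.2) = 1 := by
    rintro ⟨p, hp⟩
    ext i j
    have := (hpt' p hp).2.2.1 i j
    rw [Matrix.mul_apply, Matrix.one_apply, ← this]
    exact Finset.sum_congr rfl fun k _ => by rw [hG i k p.1 p.2 hp]; rfl
  have hdet : IsUnit G.det := by
    apply isUnit_of
    intro p
    have h1 : ev p G.det = (G.map (ev p)).det := by
      rw [AlgHom.map_det]; rfl
    rw [h1]
    exact Matrix.det_ne_zero_of_right_inverse (hinv p)
  have hGG : G * G⁻¹ = 1 := Matrix.mul_nonsing_inv G hdet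
  have hGi : ∀ i j, Rep (ginv i j) (G⁻¹ i j) := by
    intro i j x t h
    have h1 : (G.map (ev ⟨(x, t), h⟩)) * (G⁻¹.map (ev ⟨(x, t), h⟩)) = 1 := by
      rw [← Matrix.map_mul, hGG]; simp
    have h2 := left_inv_eq_right_inv (mul_eq_one_comm.mp (hinv ⟨(x, t), h⟩)) h1
    exact congrFun (congrFun h2 i) j
  have hsymm : G.transpose = G := by
    ext1 i j
    apply ev_ext
    rintro ⟨⟨x, t⟩, h⟩
    rw [Matrix.transpose_apply, ← hG j i x t h, ← hG i j x t h]
    exact (hpt' _ h).1 j i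
  let X := ofMetric (Ds hW) (Dtt hW) (fun i j a => Dv_comm hW _ _ a) (fun i a => Dv_comm hW _ _ a)
    G G⁻¹ hsymm hGG
  have hΓ : ∀ k i j, Rep (CC.Gamma g ginv k i j) (X.Γ i k j) := by
    intro k i j x t h
    change _ = ev _ ((1/2 : ℝ) • ∑ l, G⁻¹ k l *
      (Ds hW i (G j l) + Ds hW j (G i l) - Ds hW l (G i j)))
    simp only [CC.Gamma, fun i j k => (hG i j).spd hW k x t h, fun i j => hGi i j x t h,
      map_smul, map_sum, map_mul, map_add, map_sub, smul_eq_mul]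
  refine ⟨X, fun i => rfl, rfl, hG, hGi, hΓ, ?_⟩
  ext1 i j
  apply ev_ext
  rintro ⟨⟨x, t⟩, h⟩
  have h1 := (hpt' _ h).2.2.2 i j
  change CC.tpd (g i j) x t = -2 * CC.Ric g ginv i j x t at h1
  rw [(hG i j).tpd hW x t h, rep_Ric (hW := hW) (X := X) (fun i => rfl) hΓ i j x t h] at h1
  change ev _ (Dtt hW (G i j)) = ev _ (- (X.Ric i j + X.Ric i j))
  rw [h1, map_neg, map_add]; ring

namespace Model
variable {hW : IsOpen W} {g ginv : CC.Met n} {X : Geo (SA W) (Fin n)} (M : Model hW g ginv X)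

theorem riem (M : Model hW g ginv X) (l i j k : Fin n) :
    Rep (CC.Riem g ginv l i j k) (X.Rm i j l k) :=
  rep_Riem M.hD M.hΓ l i j k

theorem ric (M : Model hW g ginv X) (j k : Fin n) : Rep (CC.Ric g ginv j k) (X.Ric j k) :=
  rep_Ric M.hD M.hΓ j k

theorem ricUp (M : Model hW g ginv X) (k i : Fin n) : Rep (CC.RicUp g ginv k i) (X.S k i) := by
  intro x t h
  simp only [CC.RicUp, Geo.S, Matrix.mul_apply, map_sum, map_mul, fun i j => M.ric i j x t h,
    fun i j => M.hGi i j x t h, X.Ric_symm i]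

theorem scal (M : Model hW g ginv X) :
    Rep (CC.Scal g ginv) (∑ j, ∑ k, X.Gi j k * X.Ric j k) := by
  intro x t h
  simp only [CC.Scal, map_sum, map_mul, fun i j => M.ric i j x t h, fun i j => M.hGi i j x t h]

theorem gradScal (M : Model hW g ginv X) (l : Fin n) :
    Rep (CC.gradScal g ginv l) (∑ m, X.Gi l m * X.D m (∑ j, ∑ k, X.Gi j k * X.Ric j k)) := by
  intro x t h
  simp only [CC.gradScal, map_sum (ev _), map_mul, fun i j => M.hGi i j x t h, M.hD,
    fun m => M.scal.spd hW m x t h]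

theorem cd2 (M : Model hW g ginv X) (a j k : Fin n) :
    Rep (CC.cd2 g ginv a (CC.Ric g ginv) j k) (X.B a j k) := by
  intro x t h
  simp only [CC.cd2, Geo.B, Geo.dl_apply, map_sum (ev _), map_mul, map_sub,
    fun k i j => M.hΓ k i j x t h, M.hD,
    fun i j m => (M.ric i j).spd hW m x t h, fun i j => M.ric i j x t h]

theorem cd11 (M : Model hW g ginv X) {u : Fin n → Fin n → CC.Fld n}
    {K : Matrix (Fin n) (Fin n) (SA W)}
    (hu : ∀ i j, Rep (u i j) (K i j)) (a l j : Fin n) :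
    Rep (CC.cd11 g ginv a u l j) (X.du a K l j) := by
  intro x t h
  simp only [CC.cd11, Geo.du, Matrix.add_apply, Matrix.sub_apply, Matrix.mul_apply, md_apply,
    map_sum (ev _), map_mul, map_sub, map_add,
    fun k i j => M.hΓ k i j x t h, M.hD,
    fun i j m => (hu i j).spd hW m x t h, fun i j => hu i j x t h]
  simp only [mul_comm]

theorem lap11 (M : Model hW g ginv X) {u : Fin n → Fin n → CC.Fld n}
    {K : Matrix (Fin n) (Fin n) (SA W)}
    (hu : ∀ i j, Rep (u i j) (K i j)) (l i : Fin n) :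
    Rep (CC.lap11 g ginv u l i) (X.lapU K l i) := by
  intro x t h
  have h1 : ∀ p q, X.du p (X.du q K) l i = X.D p (X.du q K l i) + ∑ m, X.Γ p l m * X.du q K m i
      - ∑ m, X.Γ p m i * X.du q K l m := by
    intro p q
    rw [Geo.du, Matrix.sub_apply, Matrix.add_apply, Matrix.mul_apply, Matrix.mul_apply, md_apply]
    congr 1
    exact Finset.sum_congr rfl fun _ _ => mul_comm _ _
  simp only [CC.lap11, Geo.lapU, Matrix.sum_apply, Matrix.smul_apply, Matrix.sub_apply, smul_eq_mul,
    h1, map_sum (ev _), map_mul, map_sub, map_add,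
    fun k i j => M.hΓ k i j x t h, M.hD, fun i j => M.hGi i j x t h,
    fun i j m p => (M.cd11 hu i j m).spd hW p x t h, fun i j m => M.cd11 hu i j m x t h]
  exact Finset.sum_congr rfl fun p _ => Finset.sum_congr rfl fun q _ => by ring

/-- the second expression for the `(i,l)`-component -/
theorem part4 (M : Model hW g ginv X) {x : Fin n → ℝ} {t : ℝ} (h : (x, t) ∈ W) (i l : Fin n) :
    CC.tpd (CC.RicUp g ginv l i) x t = CC.lap11 g ginv (CC.RicUp g ginv) l i x t
      + 2 * (∑ m, ∑ p, ∑ q, ginv l m x t *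
            CC.Riem g ginv q p i m x t * CC.RicUp g ginv p q x t) := by
  have h1 := congrArg (ev ⟨(x, t), h⟩) (X.Dt_S M.hf l i)
  rw [M.hDt] at h1
  rw [(M.ricUp l i).tpd hW x t h, M.lap11 M.ricUp l i x t h, h1]
  simp only [Geo.Q, map_add, map_mul, map_ofNat, map_sum, fun i j => M.hGi i j x t h,
    fun i j => M.ricUp i j x t h, fun l i j k => M.riem l i j k x t h, Finset.mul_sum]
  congr 1
  refine Finset.sum_congr rfl fun _ _ => Finset.sum_congr rfl fun _ _ =>
    Finset.sum_congr rfl fun _ _ => by ring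

end Model

/-! the connection of `g̃` -/
theorem gammaSSS (g ginv : CC.Met n) (ε δ : ℝ) (l i j : Fin n) :
    CC.GammaE g ginv ε δ l.succ i.succ j.succ = CC.Gamma g ginv l i j := by
  funext x t
  simp [CC.GammaE, CC.Gamma, Fin.sum_univ_succ, CC.gEinv, CC.gE, CC.spdT]

theorem spd_zero (i : Fin n) (x : Fin n → ℝ) (t : ℝ) : CC.spd i (fun _ _ => (0:ℝ)) x t = 0 := by
  simp [CC.spd]
theorem tpd_zero (x : Fin n → ℝ) (t : ℝ) : CC.tpd (fun _ _ => (0:ℝ)) x t = 0 := by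
  simp [CC.tpd]
theorem spd_s (g ginv : CC.Met n) (ε δ : ℝ) (i : Fin n) (x : Fin n → ℝ) (t : ℝ) :
    CC.spd i (fun x t => CC.Scal g ginv x t + ε / (2 * (t + δ))) x t
      = CC.spd i (CC.Scal g ginv) x t := by
  simp [CC.spd]

theorem gammaSZZ (g ginv : CC.Met n) (ε δ : ℝ) (l : Fin n) :
    CC.GammaE g ginv ε δ l.succ 0 0 = fun x t => -(1/2) * CC.gradScal g ginv l x t := by
  funext x t
  simp [CC.GammaE, CC.gradScal, Fin.sum_univ_succ, CC.gEinv, CC.gE, CC.spdT, tpd_zero, spd_s]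

theorem gammaSSZ (g ginv : CC.Met n) (ε δ : ℝ) (l i : Fin n) :
    CC.GammaE g ginv ε δ l.succ i.succ 0
      = fun x t => (1/2) * ∑ m, ginv l m x t * CC.tpd (g i m) x t := by
  funext x t
  simp [CC.GammaE, Fin.sum_univ_succ, CC.gEinv, CC.gE, CC.spdT, spd_zero]

theorem gammaSZS (g ginv : CC.Met n) (ε δ : ℝ) (l i : Fin n) :
    CC.GammaE g ginv ε δ l.succ 0 i.succ
      = fun x t => (1/2) * ∑ m, ginv l m x t * CC.tpd (g i m) x t := by
  funext x t
  simp [CC.GammaE, Fin.sum_univ_succ, CC.gEinv, CC.gE, CC.spdT, spd_zero]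

theorem gammaZSS (g ginv : CC.Met n) (ε δ : ℝ) (i j : Fin n) (x : Fin n → ℝ) (t : ℝ) :
    CC.GammaE g ginv ε δ 0 i.succ j.succ x t
      = (CC.Scal g ginv x t + ε / (2 * (t + δ)))⁻¹ * (-(1/2) * CC.tpd (g i j) x t) := by
  simp [CC.GammaE, Fin.sum_univ_succ, CC.gEinv, CC.gE, CC.spdT, spd_zero]
  ring

theorem gammaZZS (g ginv : CC.Met n) (ε δ : ℝ) (i : Fin n) (x : Fin n → ℝ) (t : ℝ) :
    CC.GammaE g ginv ε δ 0 0 i.succ x t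
      = (CC.Scal g ginv x t + ε / (2 * (t + δ)))⁻¹ * ((1/2) * CC.spd i (CC.Scal g ginv) x t) := by
  simp [CC.GammaE, Fin.sum_univ_succ, CC.gEinv, CC.gE, CC.spdT, spd_zero, tpd_zero, spd_s]
  ring

theorem gammaZSZ (g ginv : CC.Met n) (ε δ : ℝ) (i : Fin n) (x : Fin n → ℝ) (t : ℝ) :
    CC.GammaE g ginv ε δ 0 i.succ 0 x t
      = (CC.Scal g ginv x t + ε / (2 * (t + δ)))⁻¹ * ((1/2) * CC.spd i (CC.Scal g ginv) x t) := by
  simp [CC.GammaE, Fin.sum_univ_succ, CC.gEinv, CC.gE, CC.spdT, spd_zero, tpd_zero, spd_s]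
  ring

theorem gammaZZZ (g ginv : CC.Met n) (ε δ : ℝ) (x : Fin n → ℝ) (t : ℝ) :
    CC.GammaE g ginv ε δ 0 0 0 x t
      = (CC.Scal g ginv x t + ε / (2 * (t + δ)))⁻¹ *
        ((1/2) * CC.tpd (fun x t => CC.Scal g ginv x t + ε / (2 * (t + δ))) x t) := by
  simp [CC.GammaE, Fin.sum_univ_succ, CC.gEinv, CC.gE, CC.spdT]
  ring

theorem inv_tendsto (R c : ℝ) (hc : 0 < c) :
    Filter.Tendsto (fun ε : ℝ => (R + ε / c)⁻¹) Filter.atTop (𝓝 0) :=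
  Filter.Tendsto.inv_tendsto_atTop
    (Filter.tendsto_atTop_add_const_left _ R (Filter.tendsto_id.atTop_div_const hc))

theorem inv_mul_tendsto (R c a : ℝ) (hc : 0 < c) :
    Filter.Tendsto (fun ε : ℝ => (R + ε / c)⁻¹ * a) Filter.atTop (𝓝 0) := by
  simpa using (inv_tendsto R c hc).mul_const a

/-- `Γ̃^l_{i0} = -R^l_i` -/
theorem Model.rep_ss0 {hW : IsOpen W} {g ginv : CC.Met n} {X : Geo (SA W) (Fin n)}
    (M : Model hW g ginv X) (l i : Fin n) :
    Rep (fun x t => (1/2) * ∑ m, ginv l m x t * CC.tpd (g i m) x t) (- X.S l i) := by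
  intro x t h
  have h1 : ∀ i m, CC.tpd (g i m) x t = -2 * CC.Ric g ginv i m x t := by
    intro i m
    rw [(M.hG i m).tpd hW x t h, M.ric i m x t h, ← M.hDt]
    have := congrArg (ev ⟨(x, t), h⟩) (congrFun (congrFun M.hf i) m)
    rw [md_apply] at this
    rw [this]
    change ev _ (- (X.Ric i m + X.Ric i m)) = _
    rw [map_neg, map_add]; ring
  rw [map_neg, ← M.ricUp l i x t h]
  simp only [h1, CC.RicUp, Finset.mul_sum, ← Finset.sum_neg_distrib]
  exact Finset.sum_congr rfl fun _ _ => by ring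

theorem Model.part1 (g ginv : CC.Met n) (x : Fin n → ℝ) (t δ : ℝ) (ht : 0 < 2 * (t + δ))
    (i j k l : Fin n) :
    Filter.Tendsto
        (fun ε => CC.RiemT (CC.GammaE g ginv ε δ) l.succ i.succ j.succ k.succ x t)
        Filter.atTop (𝓝 (CC.Riem g ginv l i j k x t)) := by
  have h : ∀ ε, CC.RiemT (CC.GammaE g ginv ε δ) l.succ i.succ j.succ k.succ x t
      = CC.Riem g ginv l i j k x t
        + (CC.GammaE g ginv ε δ 0 j.succ k.succ x t * CC.GammaE g ginv 0 δ l.succ i.succ 0 x t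
          - CC.GammaE g ginv ε δ 0 i.succ k.succ x t
            * CC.GammaE g ginv 0 δ l.succ j.succ 0 x t) := by
    intro ε
    simp only [CC.RiemT, CC.Riem, Fin.sum_univ_succ, gammaSSS, gammaSSZ, CC.spdT, Fin.cases_succ]
    ring
  simp only [h, gammaZSS]
  have hl := (tendsto_const_nhds (x := CC.Riem g ginv l i j k x t)).add
    (((inv_mul_tendsto (CC.Scal g ginv x t) (2 * (t + δ))
      (-(1/2) * CC.tpd (g j k) x t) ht).mul_const
        (CC.GammaE g ginv 0 δ l.succ i.succ 0 x t)).sub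
    ((inv_mul_tendsto (CC.Scal g ginv x t) (2 * (t + δ))
      (-(1/2) * CC.tpd (g i k) x t) ht).mul_const
        (CC.GammaE g ginv 0 δ l.succ j.succ 0 x t)))
  simp only [zero_mul, sub_zero, add_zero] at hl
  exact hl

theorem Model.part2 {hW : IsOpen W} {g ginv : CC.Met n} {X : Geo (SA W) (Fin n)}
    (M : Model hW g ginv X) {x : Fin n → ℝ} {t : ℝ} (hx : (x, t) ∈ W) {δ : ℝ}
    (ht : 0 < 2 * (t + δ)) (j k l : Fin n) :
    Filter.Tendsto
        (fun ε => CC.RiemT (CC.GammaE g ginv ε δ) l.succ 0 j.succ k.succ x t)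
        Filter.atTop
        (𝓝 (- CC.cd11 g ginv k (CC.RicUp g ginv) l j x t
          + ∑ m, ginv l m x t * CC.cd2 g ginv m (CC.Ric g ginv) j k x t)) := by
  have key : X.Dt (X.Γ j l k) - X.D j (- X.S l k)
      + ∑ m, (X.Γ j m k * (- X.S l m) - (- X.S m k) * X.Γ j l m)
      = - X.du k X.S l j + ∑ m, X.Gi l m * X.B m j k := by
    rw [X.Dt_Γ M.hf]
    have : X.du j X.S l k = X.D j (X.S l k) + ∑ m, X.Γ j l m * X.S m k
        - ∑ m, X.S l m * X.Γ j m k := by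
      rw [Geo.du, Matrix.sub_apply, Matrix.add_apply, Matrix.mul_apply, Matrix.mul_apply, md_apply]
    rw [this, Finset.sum_sub_distrib, map_neg]
    have e1 : ∑ m, X.Γ j m k * (- X.S l m) = - ∑ m, X.S l m * X.Γ j m k := by
      rw [← Finset.sum_neg_distrib]
      exact Finset.sum_congr rfl fun m _ => by ring
    have e2 : ∑ m, (- X.S m k) * X.Γ j l m = - ∑ m, X.Γ j l m * X.S m k := by
      rw [← Finset.sum_neg_distrib]
      exact Finset.sum_congr rfl fun m _ => by ring
    rw [e1, e2]
    ring
  have h : ∀ ε, CC.RiemT (CC.GammaE g ginv ε δ) l.succ 0 j.succ k.succ x t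
      = (- CC.cd11 g ginv k (CC.RicUp g ginv) l j x t
          + ∑ m, ginv l m x t * CC.cd2 g ginv m (CC.Ric g ginv) j k x t)
        + (CC.GammaE g ginv ε δ 0 j.succ k.succ x t * CC.GammaE g ginv 0 δ l.succ 0 0 x t
          - CC.GammaE g ginv ε δ 0 0 k.succ x t
            * CC.GammaE g ginv 0 δ l.succ j.succ 0 x t) := by
    intro ε
    have e := congrArg (ev ⟨(x, t), hx⟩) key
    simp only [map_add, map_sub (ev _), map_sum (ev _), map_mul, map_neg (ev _), M.hD, M.hDt] at e
    rw [← M.cd11 M.ricUp k l j x t hx] at e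
    simp only [← M.hGi _ _ x t hx, ← M.cd2 _ _ _ x t hx] at e
    rw [← e]
    simp only [CC.RiemT, Fin.sum_univ_succ, gammaSSS, gammaSSZ, gammaSZS, gammaSZZ, CC.spdT,
      Fin.cases_succ, Fin.cases_zero, fun l i m => (M.rep_ss0 l i).spd hW m x t hx,
      fun l j k => (M.hΓ l j k).tpd hW x t hx, fun l j k => M.hΓ l j k x t hx,
      fun l i => M.rep_ss0 l i x t hx, map_neg (ev _)]
    ring
  simp only [h, gammaZSS, gammaZZS]
  have hl := (tendsto_const_nhds (x := (- CC.cd11 g ginv k (CC.RicUp g ginv) l j x t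
          + ∑ m, ginv l m x t * CC.cd2 g ginv m (CC.Ric g ginv) j k x t))).add
    (((inv_mul_tendsto (CC.Scal g ginv x t) (2 * (t + δ))
      (-(1/2) * CC.tpd (g j k) x t) ht).mul_const
        (CC.GammaE g ginv 0 δ l.succ 0 0 x t)).sub
    ((inv_mul_tendsto (CC.Scal g ginv x t) (2 * (t + δ))
      ((1/2) * CC.spd k (CC.Scal g ginv) x t) ht).mul_const
        (CC.GammaE g ginv 0 δ l.succ j.succ 0 x t)))
  simp only [zero_mul, sub_zero, add_zero] at hl
  exact hl

theorem Rep.diff_t (hW : IsOpen W) {u : CC.Fld n} {a : SA W} (h : Rep u a)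
    {x : Fin n → ℝ} {t : ℝ} (hx : (x, t) ∈ W) : DifferentiableAt ℝ (fun s => u x s) t := by
  have h1 : (fun s => u x s) =ᶠ[𝓝 t] fun s => ext0 W a.1 (x, s) := by
    have hc : Filter.Tendsto (fun s : ℝ => (x, s)) (𝓝 t) (𝓝 (x, t)) :=
      (Continuous.prodMk_right x).continuousAt
    filter_upwards [hc.eventually (hW.mem_nhds hx)] with y hy
    rw [h x y hy, ext0_ev a hy]
  refine DifferentiableAt.congr_of_eventuallyEq ?_ h1
  exact ((diffAt hW a hx).hasFDerivAt.comp t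
    (hasFDerivAt_prodMk_right (𝕜 := ℝ) x t)).differentiableAt

theorem Model.lim000 {hW : IsOpen W} {g ginv : CC.Met n} {X : Geo (SA W) (Fin n)}
    (M : Model hW g ginv X) {x : Fin n → ℝ} {t : ℝ} (hx : (x, t) ∈ W) {δ : ℝ}
    (ht : 0 < t + δ) :
    Filter.Tendsto (fun ε => CC.GammaE g ginv ε δ 0 0 0 x t) Filter.atTop
      (𝓝 (-(1 / (2 * (t + δ))))) := by
  have hd : ∀ ε : ℝ, CC.tpd (fun x t => CC.Scal g ginv x t + ε / (2 * (t + δ))) x t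
      = CC.tpd (CC.Scal g ginv) x t - ε / (2 * (t + δ) ^ 2) := by
    intro ε
    have h1 : HasDerivAt (fun s => CC.Scal g ginv x s) (CC.tpd (CC.Scal g ginv) x t) t :=
      (M.scal.diff_t hW hx).hasDerivAt
    have h2 : HasDerivAt (fun s : ℝ => 2 * (s + δ)) 2 t := by
      simpa using ((hasDerivAt_id t).add_const δ).const_mul 2
    have h3 := (hasDerivAt_const t ε).fun_div h2 (by positivity)
    have h4 := (h1.fun_add h3).deriv
    rw [CC.tpd, h4]
    field_simp
    ring
  set R := CC.Scal g ginv x t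
  set a := CC.tpd (CC.Scal g ginv) x t
  have hlim := (tendsto_const_nhds (x := -(1 / (2 * (t + δ))))).add
    (inv_mul_tendsto R (2 * (t + δ)) ((1/2) * (a + R / (t + δ))) (by positivity))
  rw [add_zero] at hlim
  refine hlim.congr' ?_
  have hpos := (Filter.tendsto_atTop_add_const_left Filter.atTop R
    (Filter.tendsto_id.atTop_div_const (show 0 < 2 * (t + δ) by positivity))).eventually_gt_atTop 0
  filter_upwards [hpos] with ε hε
  rw [gammaZZZ, hd]
  simp only [id] at hε
  have hne : R + ε / (2 * (t + δ)) ≠ 0 := hε.ne'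
  change _ = (R + ε / (2 * (t + δ)))⁻¹ * ((1/2) * (a - ε / (2 * (t + δ) ^ 2)))
  have hv : (R + ε / (2 * (t + δ)))⁻¹ * (R + ε / (2 * (t + δ))) = 1 := inv_mul_cancel₀ hne
  generalize (R + ε / (2 * (t + δ)))⁻¹ = v at hv ⊢
  field_simp
  field_simp at hv
  linear_combination hv

theorem Model.part3 {hW : IsOpen W} {g ginv : CC.Met n} {X : Geo (SA W) (Fin n)}
    (M : Model hW g ginv X) {x : Fin n → ℝ} {t : ℝ} (hx : (x, t) ∈ W) {δ : ℝ}
    (ht : 0 < t + δ) (i l : Fin n) :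
    Filter.Tendsto (fun ε => CC.RiemT (CC.GammaE g ginv ε δ) l.succ i.succ 0 0 x t)
      Filter.atTop
      (𝓝 (CC.tpd (CC.RicUp g ginv l i) x t
          - (1/2) * CC.cdVec g ginv i (CC.gradScal g ginv) l x t
          - (∑ m, CC.RicUp g ginv m i x t * CC.RicUp g ginv l m x t)
          + (1 / (2 * (t + δ))) * CC.RicUp g ginv l i x t)) := by
  have hgr : Rep (fun x t => -(1/2) * CC.gradScal g ginv l x t)
      ((-(1/2) : ℝ) • (∑ m, X.Gi l m * X.D m (∑ j, ∑ k, X.Gi j k * X.Ric j k))) := by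
    intro x t h
    change -(1/2) * CC.gradScal g ginv l x t = _
    rw [map_smul, M.gradScal l x t h, smul_eq_mul]
  have h : ∀ ε, CC.RiemT (CC.GammaE g ginv ε δ) l.succ i.succ 0 0 x t
      = (CC.tpd (CC.RicUp g ginv l i) x t
          - (1/2) * CC.cdVec g ginv i (CC.gradScal g ginv) l x t
          - (∑ m, CC.RicUp g ginv m i x t * CC.RicUp g ginv l m x t))
        + (CC.GammaE g ginv ε δ 0 0 0 x t * (- CC.RicUp g ginv l i x t)
          - CC.GammaE g ginv ε δ 0 i.succ 0 x t
            * CC.GammaE g ginv 0 δ l.succ 0 0 x t) := by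
    intro ε
    simp only [CC.RiemT, Fin.sum_univ_succ, gammaSSS, gammaSSZ, gammaSZS, gammaSZZ, CC.spdT,
      Fin.cases_succ, Fin.cases_zero, hgr.spd hW i x t hx, (M.rep_ss0 l i).tpd hW x t hx,
      fun l i => M.rep_ss0 l i x t hx, CC.cdVec, (M.gradScal l).spd hW i x t hx,
      (M.ricUp l i).tpd hW x t hx, fun l i => M.ricUp l i x t hx]
    simp only [Derivation.map_smul, Derivation.map_neg, map_neg (ev _), map_smul (ev _),
      smul_eq_mul, Finset.sum_sub_distrib, mul_add, Finset.mul_sum]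
    have e1 : ∑ m, -(1/2) * CC.gradScal g ginv m x t * CC.Gamma g ginv l i m x t
        = - ∑ m, 1/2 * (CC.Gamma g ginv l i m x t * CC.gradScal g ginv m x t) := by
      rw [← Finset.sum_neg_distrib]
      exact Finset.sum_congr rfl fun _ _ => by ring
    rw [e1]
    simp only [neg_mul_neg]
    ring
  simp only [h, gammaZSZ]
  have hl := (tendsto_const_nhds (x := (CC.tpd (CC.RicUp g ginv l i) x t
          - (1/2) * CC.cdVec g ginv i (CC.gradScal g ginv) l x t
          - (∑ m, CC.RicUp g ginv m i x t * CC.RicUp g ginv l m x t)))).add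
    (((M.lim000 hx ht).mul_const (- CC.RicUp g ginv l i x t)).sub
    ((inv_mul_tendsto (CC.Scal g ginv x t) (2 * (t + δ))
      ((1/2) * CC.spd i (CC.Scal g ginv) x t) (by positivity)).mul_const
      (CC.GammaE g ginv 0 δ l.succ 0 0 x t)))
  convert hl using 2
  ring

end SmA

/-- Theorem 4.5(2) of Chow–Chu. As `ε → ∞`, the curvature
components of `g̃_{ε,δ}` converge to the spatial curvature and to `−∇_kR^l_j + ∇^lR_{jk}`;
and the iterated limit (`ε → ∞`, then `δ → 0⁺`) of `R̃^l_{i00}` is exactly the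
`(W,W)`-component of Hamilton's Harnack expression `Z + (1/(2t)) R_{ij}W_iW_j`. -/
theorem approx_curvature_limit (n : ℕ) (hn : 2 ≤ n)
    (Ωs : Set (Fin n → ℝ)) (T : ℝ)
    (g ginv : CC.Met n) (hg : CC.RicciFlow Ωs T g ginv)
    (x : Fin n → ℝ) (hx : x ∈ Ωs) (t : ℝ) (ht : t ∈ Set.Ioo (0:ℝ) T) :
    (∀ δ > (0:ℝ), ∀ i j k l : Fin n,
      Filter.Tendsto
        (fun ε => CC.RiemT (CC.GammaE g ginv ε δ) l.succ i.succ j.succ k.succ x t)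
        Filter.atTop (nhds (CC.Riem g ginv l i j k x t))) ∧
    (∀ δ > (0:ℝ), ∀ j k l : Fin n,
      Filter.Tendsto
        (fun ε => CC.RiemT (CC.GammaE g ginv ε δ) l.succ 0 j.succ k.succ x t)
        Filter.atTop
        (nhds (- CC.cd11 g ginv k (CC.RicUp g ginv) l j x t
          + ∑ m, ginv l m x t * CC.cd2 g ginv m (CC.Ric g ginv) j k x t))) ∧
    (∀ i l : Fin n,
      Filter.Tendsto
        (fun δ => limUnder Filter.atTop
          (fun ε => CC.RiemT (CC.GammaE g ginv ε δ) l.succ i.succ 0 0 x t))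
        (nhdsWithin 0 (Set.Ioi 0))
        (nhds (CC.tpd (CC.RicUp g ginv l i) x t
          - (1/2) * CC.cdVec g ginv i (CC.gradScal g ginv) l x t
          - (∑ m, CC.RicUp g ginv m i x t * CC.RicUp g ginv l m x t)
          + (1 / (2 * t)) * CC.RicUp g ginv l i x t))) ∧
    -- the two expressions for the limiting `(i,l)`-component agree
    (∀ i l : Fin n,
      CC.tpd (CC.RicUp g ginv l i) x t
        - (1/2) * CC.cdVec g ginv i (CC.gradScal g ginv) l x t
        - (∑ m, CC.RicUp g ginv m i x t * CC.RicUp g ginv l m x t)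
        + (1 / (2 * t)) * CC.RicUp g ginv l i x t =
      CC.lap11 g ginv (CC.RicUp g ginv) l i x t
        - (1/2) * CC.cdVec g ginv i (CC.gradScal g ginv) l x t
        + 2 * (∑ m, ∑ p, ∑ q, ginv l m x t *
            CC.Riem g ginv q p i m x t * CC.RicUp g ginv p q x t)
        - (∑ m, CC.RicUp g ginv m i x t * CC.RicUp g ginv l m x t)
        + (1 / (2 * t)) * CC.RicUp g ginv l i x t) := by
  have hW : IsOpen (Ωs ×ˢ Set.Ioo 0 T) := hg.1.prod isOpen_Ioo
  obtain ⟨X, M⟩ := SmA.exists_model hg hW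
  have hp : (x, t) ∈ Ωs ×ˢ Set.Ioo 0 T := ⟨hx, ht⟩
  have ht0 : 0 < t := ht.1
  refine ⟨?_, ?_, ?_, ?_⟩
  · intro δ hδ i j k l
    exact SmA.Model.part1 g ginv x t δ (by positivity) i j k l
  · intro δ hδ j k l
    exact M.part2 hp (by positivity) j k l
  · intro i l
    have hlim : Filter.Tendsto (fun δ : ℝ => CC.tpd (CC.RicUp g ginv l i) x t
          - (1/2) * CC.cdVec g ginv i (CC.gradScal g ginv) l x t
          - (∑ m, CC.RicUp g ginv m i x t * CC.RicUp g ginv l m x t)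
          + (1 / (2 * (t + δ))) * CC.RicUp g ginv l i x t) (nhdsWithin 0 (Set.Ioi 0))
        (nhds (CC.tpd (CC.RicUp g ginv l i) x t
          - (1/2) * CC.cdVec g ginv i (CC.gradScal g ginv) l x t
          - (∑ m, CC.RicUp g ginv m i x t * CC.RicUp g ginv l m x t)
          + (1 / (2 * t)) * CC.RicUp g ginv l i x t)) := by
      apply tendsto_nhdsWithin_of_tendsto_nhds
      refine tendsto_const_nhds.add (Filter.Tendsto.mul_const _ ?_)
      have hc : ContinuousAt (fun δ : ℝ => 1 / (2 * (t + δ))) 0 := by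
        refine ContinuousAt.div continuousAt_const (by fun_prop) ?_
        simpa using ht0.ne'
      have := hc.tendsto
      simpa using this
    refine hlim.congr' ?_
    filter_upwards [self_mem_nhdsWithin] with δ hδ
    have hδ' : 0 < δ := hδ
    exact (M.part3 hp (by positivity) i l).limUnder_eq.symm
  · intro i l
    rw [M.part4 hp i l]
    ring
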